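/- arXiv:1503.01623 — 2 statements merged into one kernel-verified Lean document; each statement's English description precedes it below -/
import Mathlib

section
/- Let T ∈ (0,∞], 1 < r₁, r₂ < ∞, 1 ≤ q₁ ≤ q₂ ≤ ∞ with (N/2)(1/q₁ - 1/q₂) + 1/2 < 1 and 1/r₁ + (N/2)(1/q₁ - 1/q₂) = 1/2 + 1/r₂. Then the operator B defined by (Bf)(t) = ∫₀ᵗ ∇e^{(t-s)Δ} f(s) ds is bounded from L^{r₁}(0,T; L^{q₁}(ℝ^N)) to L^{r₂}(0,T; L^{q₂}(ℝ^N)). -/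
open MeasureTheory Real
open scoped ENNReal

noncomputable section

/-- The heat kernel on `ℝ^N`. -/
def heatKernel (N : ℕ) (t : ℝ) (x : EuclideanSpace ℝ (Fin N)) : ℝ :=
  (4 * π * t) ^ (-(N : ℝ) / 2) * Real.exp (-‖x‖ ^ 2 / (4 * t))

/-- Mixed space-time norm `‖f‖_{L^r(0,T;L^q)}` (with `T ∈ (0,∞]`, time exponent `r` finite). -/
def mixedNorm {N : ℕ} {F : Type*} [NormedAddCommGroup F] (r : ℝ) (q : ℝ≥0∞) (T : ℝ≥0∞)
    (f : ℝ → EuclideanSpace ℝ (Fin N) → F) : ℝ≥0∞ :=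
  (∫⁻ t in {t : ℝ | 0 < t ∧ ENNReal.ofReal t < T}, (eLpNorm (f t) q volume) ^ r) ^ (1 / r)

/-- The operator `B f (t) = ∫₀ᵗ ∇e^{(t-s)Δ} f(s) ds`, realized as convolution with the gradient
of the heat kernel. -/
def heatOpB {N : ℕ} (f : ℝ → EuclideanSpace ℝ (Fin N) → ℝ) (t : ℝ)
    (x : EuclideanSpace ℝ (Fin N)) : EuclideanSpace ℝ (Fin N) :=
  ∫ s in Set.Ioo 0 t, ∫ y, f s y • gradient (heatKernel N (t - s)) (x - y)

/-! ### Fractional integration on the line -/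

theorem lintegral_Ioo_rpow {b e : ℝ} (hb : 0 ≤ b) (he : 0 < e) :
    ∫⁻ x in Set.Ioo 0 b, ENNReal.ofReal (x ^ (e - 1)) = ENNReal.ofReal (b ^ e / e) := by
  have hi : IntegrableOn (fun x : ℝ => x ^ (e - 1)) (Set.Ioc 0 b) := by
    have := intervalIntegral.intervalIntegrable_rpow' (a := 0) (b := b) (r := e - 1) (by linarith)
    exact (intervalIntegrable_iff_integrableOn_Ioc_of_le hb).1 this
  rw [setLIntegral_congr Ioo_ae_eq_Ioc, ← ofReal_integral_eq_lintegral_ofReal hi]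
  · rw [← intervalIntegral.integral_of_le hb, integral_rpow (Or.inl (by linarith))]
    simp [Real.zero_rpow he.ne']
  · filter_upwards [ae_restrict_mem measurableSet_Ioc] with x hx
    exact Real.rpow_nonneg hx.1.le _

theorem lintegral_Ioi_rpow {R e : ℝ} (hR : 0 < R) (he : e < -1) :
    ∫⁻ x in Set.Ioi R, ENNReal.ofReal (x ^ e) = ENNReal.ofReal (-R ^ (e + 1) / (e + 1)) := by
  rw [← integral_Ioi_rpow_of_lt he hR, ← ofReal_integral_eq_lintegral_ofReal
    (integrableOn_Ioi_rpow_of_lt he hR)]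
  filter_upwards [ae_restrict_mem measurableSet_Ioi] with x hx
  exact Real.rpow_nonneg (hR.trans hx).le _

/-- Layer-cake formula for the power of a single extended nonnegative number. -/
theorem lintegral_Ioi_rpow_indicator (y : ℝ≥0∞) {e : ℝ} (he : 0 < e) :
    ∫⁻ x in Set.Ioi (0 : ℝ),
      {x : ℝ | ENNReal.ofReal x < y}.indicator (fun x => ENNReal.ofReal (x ^ (e - 1))) x
      = y ^ e / ENNReal.ofReal e := by
  have hm : MeasurableSet {x : ℝ | ENNReal.ofReal x < y} :=
    measurableSet_lt ENNReal.measurable_ofReal measurable_const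
  rw [lintegral_indicator hm, Measure.restrict_restrict hm]
  induction y with
  | top =>
    rw [ENNReal.top_rpow_of_pos he, ENNReal.top_div_of_ne_top ENNReal.ofReal_ne_top]
    refine ENNReal.eq_top_of_forall_nnreal_le fun c => ?_
    have hc : (0 : ℝ) ≤ c * e := by positivity
    calc (c : ℝ≥0∞) = ENNReal.ofReal ((((c : ℝ) * e) ^ (1 / e)) ^ e / e) := by
          rw [← Real.rpow_mul hc, one_div_mul_cancel he.ne', Real.rpow_one,
            mul_div_cancel_right₀ _ he.ne', ENNReal.ofReal_coe_nnreal]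
      _ = ∫⁻ x in Set.Ioo 0 (((c : ℝ) * e) ^ (1 / e)), ENNReal.ofReal (x ^ (e - 1)) :=
          (lintegral_Ioo_rpow (by positivity) he).symm
      _ ≤ _ := lintegral_mono_set fun x (hx : x ∈ Set.Ioo _ _) =>
          Set.mem_inter (show ENNReal.ofReal x < ∞ from ENNReal.ofReal_lt_top) hx.1
  | coe y =>
    have : {x : ℝ | ENNReal.ofReal x < y} ∩ Set.Ioi 0 = Set.Ioo 0 (y : ℝ) := by
      ext x
      simp only [Set.mem_inter_iff, Set.mem_ofPred_eq, Set.mem_Ioi, Set.mem_Ioo]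
      rw [and_comm]
      refine and_congr_right fun hx => ?_
      rw [← ENNReal.ofReal_coe_nnreal, ENNReal.ofReal_lt_ofReal_iff_of_nonneg hx.le]
    rw [this]
    refine (lintegral_Ioo_rpow y.coe_nonneg he).trans ?_
    rw [ENNReal.ofReal_div_of_pos he,
      ← ENNReal.ofReal_rpow_of_nonneg y.coe_nonneg he.le, ENNReal.ofReal_coe_nnreal]

/-- Truncated weak-type bound behind the one-sided Hardy-Littlewood-Sobolev inequality. -/
theorem meas_fractionalIntegral_gt_le {β p r : ℝ} (hβ₁ : β < 1) (hp : 1 < p) (hr : 0 < r)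
    (h : 1 / p + β = 1 + 1 / r) : ∃ c : ℝ, 0 < c ∧ ∀ m : ℝ → ℝ≥0∞, Measurable m →
      ∫⁻ s, m s ^ p ≤ 1 → ∀ l : ℝ, 0 < l →
      volume {t | ENNReal.ofReal (c * l) <
          ∫⁻ s, (Set.Ioi 0).indicator (fun u => ENNReal.ofReal (u ^ (-β))) (t - s) * m s}
        ≤ ENNReal.ofReal (l ^ (-(r / p)) / (1 - β)) *
          ∫⁻ s, {x | ENNReal.ofReal (l ^ (r / p)) < x}.indicator id (m s) := by
  have hp0 : 0 < p := by linarith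
  have hpq : p.HolderConjugate (p / (p - 1)) := Real.HolderConjugate.conjExponent hp
  set p' := p / (p - 1) with hp'
  have hp'0 : 0 < p' := hpq.symm.pos
  have hinv : 1 / p' = 1 - 1 / p := by
    have := hpq.inv_add_inv_eq_one
    rw [one_div, one_div]; linarith
  have hβp : 1 / p' - β = - (1 / r) := by rw [hinv]; linarith
  have hβp' : 1 < β * p' := by
    have : 1 / p' < β := by have : 0 < 1 / r := by positivity
                            linarith
    rwa [div_lt_iff₀ hp'0] at this
  set c₁ : ℝ := (1 / (β * p' - 1)) ^ (1 / p') with hc₁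
  have hc₁0 : 0 < c₁ := by
    have : 0 < β * p' - 1 := by linarith
    positivity
  have h1β : 0 < 1 - β := by linarith
  refine ⟨c₁ + 1 / (1 - β) + 1, by positivity, fun m hm hm1 l hl => ?_⟩
  set R : ℝ := l ^ (-r) with hR
  have hR0 : 0 < R := Real.rpow_pos_of_pos hl _
  set a : ℝ := l ^ (r / p) with ha
  have ha0 : 0 < a := Real.rpow_pos_of_pos hl _
  set k₀ : ℝ → ℝ≥0∞ := (Set.Ioo 0 R).indicator (fun u => ENNReal.ofReal (u ^ (-β))) with hk₀
  set k₁ : ℝ → ℝ≥0∞ := (Set.Ici R).indicator (fun u => ENNReal.ofReal (u ^ (-β))) with hk₁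
  have hk₀m : Measurable k₀ := by
    refine Measurable.indicator ?_ measurableSet_Ioo
    fun_prop
  have hk₁m : Measurable k₁ := by
    refine Measurable.indicator ?_ measurableSet_Ici
    fun_prop
  set M : ℝ → ℝ≥0∞ := fun s => {x | ENNReal.ofReal a < x}.indicator id (m s) with hM
  have hMm : Measurable M :=
    (measurable_id.indicator (measurableSet_lt measurable_const measurable_id)).comp hm
  have hmM : ∀ s, m s ≤ ENNReal.ofReal a + M s := by
    intro s
    by_cases hs : ENNReal.ofReal a < m s
    · simp only [hM, Set.indicator, Set.mem_ofPred_eq, hs, if_true, id]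
      exact le_add_self
    · exact (not_lt.1 hs).trans le_self_add
  have hk₀i : ∫⁻ u, k₀ u = ENNReal.ofReal (R ^ (1 - β) / (1 - β)) := by
    rw [hk₀, lintegral_indicator measurableSet_Ioo, ← lintegral_Ioo_rpow hR0.le h1β]
    simp
  have hk₁i : (∫⁻ u, k₁ u ^ p') ^ (1 / p') = ENNReal.ofReal (c₁ * l) := by
    have : ∀ u, k₁ u ^ p' = (Set.Ici R).indicator (fun u => ENNReal.ofReal (u ^ (-(β * p')))) u := by
      intro u
      by_cases hu : u ∈ Set.Ici R
      · have hu0 : 0 < u := hR0.trans_le hu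
        simp only [hk₁, Set.indicator_of_mem hu]
        rw [ENNReal.ofReal_rpow_of_nonneg (by positivity) hp'0.le, ← Real.rpow_mul hu0.le]
        congr 2; ring
      · simp [hk₁, Set.indicator_of_notMem hu, hp'0]
    simp_rw [this]
    rw [lintegral_indicator measurableSet_Ici, setLIntegral_congr Ioi_ae_eq_Ici.symm,
      lintegral_Ioi_rpow hR0 (by linarith)]
    have h2 : 0 < β * p' - 1 := by linarith
    have e1 : -R ^ (-(β * p') + 1) / (-(β * p') + 1) = (1 / (β * p' - 1)) * R ^ (-(β * p') + 1) := by
      rw [show -(β * p') + 1 = -(β * p' - 1) by ring, neg_div_neg_eq]; ring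
    rw [e1, ENNReal.ofReal_rpow_of_nonneg (by positivity) (by positivity),
      Real.mul_rpow (by positivity) (by positivity), hc₁]
    congr 2
    rw [hR, ← Real.rpow_mul hl.le, ← Real.rpow_mul hl.le]
    convert Real.rpow_one l using 2
    have : (-(β * p') + 1) * (1 / p') = 1 / p' - β := by field_simp; ring
    rw [mul_assoc, this, hβp]; field_simp
  have haR : a * R ^ (1 - β) = l := by
    rw [ha, hR, ← Real.rpow_mul hl.le, ← Real.rpow_add hl]
    convert Real.rpow_one l using 2
    have : 1 / p - (1 - β) = 1 / r := by linarith
    have : r / p - r * (1 - β) = 1 := by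
      rw [show r / p - r * (1 - β) = r * (1 / p - (1 - β)) by ring, this]; field_simp
    linarith
  have key : ∀ t, ∫⁻ s, (Set.Ioi 0).indicator (fun u => ENNReal.ofReal (u ^ (-β))) (t - s) * m s
      ≤ ENNReal.ofReal (c₁ * l) + ENNReal.ofReal (1 / (1 - β) * l) + ∫⁻ s, k₀ (t - s) * M s := by
    intro t
    calc _ ≤ ∫⁻ s, (k₁ (t - s) * m s + (ENNReal.ofReal a * k₀ (t - s) + k₀ (t - s) * M s)) := by
          refine lintegral_mono fun s => ?_
          have hk : (Set.Ioi 0).indicator (fun u => ENNReal.ofReal (u ^ (-β))) (t - s)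
              ≤ k₁ (t - s) + k₀ (t - s) := by
            by_cases h0 : 0 < t - s
            · by_cases h1 : t - s < R
              · simp [hk₁, hk₀, Set.indicator, h0, h1]
              · simp [hk₁, hk₀, Set.indicator, h0, h1, not_lt.1 h1]
            · simp [Set.indicator, h0]
          calc _ ≤ (k₁ (t - s) + k₀ (t - s)) * m s := by gcongr
            _ ≤ k₁ (t - s) * m s + k₀ (t - s) * (ENNReal.ofReal a + M s) := by
              rw [add_mul]; gcongr; exact hmM s
            _ = _ := by ring
      _ = (∫⁻ s, k₁ (t - s) * m s) +
          (ENNReal.ofReal a * (∫⁻ s, k₀ (t - s)) + ∫⁻ s, k₀ (t - s) * M s) := by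
          rw [lintegral_add_left (by fun_prop), lintegral_add_left (by fun_prop),
            lintegral_const_mul _ (by fun_prop)]
      _ ≤ _ := by
          rw [add_assoc]
          gcongr ?_ + (?_ + _)
          · calc ∫⁻ s, k₁ (t - s) * m s
                ≤ (∫⁻ s, k₁ (t - s) ^ p') ^ (1 / p') * (∫⁻ s, m s ^ p) ^ (1 / p) :=
                  ENNReal.lintegral_mul_le_Lp_mul_Lq _ hpq.symm
                    (by fun_prop) hm.aemeasurable
              _ ≤ ENNReal.ofReal (c₁ * l) * 1 := by
                  gcongr
                  · rw [lintegral_sub_left_eq_self (fun u => k₁ u ^ p'), hk₁i]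
                  · exact ENNReal.rpow_le_one hm1 (by positivity)
              _ = _ := mul_one _
          · rw [lintegral_sub_left_eq_self, hk₀i, ← ENNReal.ofReal_mul ha0.le]
            apply le_of_eq
            congr 1
            rw [← haR]; ring
  have hsub : {t | ENNReal.ofReal ((c₁ + 1 / (1 - β) + 1) * l) <
          ∫⁻ s, (Set.Ioi 0).indicator (fun u => ENNReal.ofReal (u ^ (-β))) (t - s) * m s}
      ⊆ {t | ENNReal.ofReal l ≤ ∫⁻ s, k₀ (t - s) * M s} := by
    intro t ht
    simp only [Set.mem_ofPred_eq] at ht ⊢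
    have h3 := ht.trans_le (key t)
    rw [add_mul, add_mul, one_mul, ENNReal.ofReal_add (by positivity) hl.le,
      ENNReal.ofReal_add (by positivity) (by positivity)] at h3
    exact (lt_of_add_lt_add_left h3).le
  have hmeas2 : Measurable fun z : ℝ × ℝ => k₀ (z.1 - z.2) * M z.2 := by fun_prop
  calc _ ≤ volume {t | ENNReal.ofReal l ≤ ∫⁻ s, k₀ (t - s) * M s} := measure_mono hsub
    _ ≤ (∫⁻ t, ∫⁻ s, k₀ (t - s) * M s) / ENNReal.ofReal l :=
        meas_ge_le_lintegral_div hmeas2.lintegral_prod_right'.aemeasurable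
          (by simpa using hl) ENNReal.ofReal_ne_top
    _ = (∫⁻ s, ∫⁻ t, k₀ (t - s) * M s) / ENNReal.ofReal l := by
        rw [lintegral_lintegral_swap hmeas2.aemeasurable]
    _ = (ENNReal.ofReal (R ^ (1 - β) / (1 - β)) * ∫⁻ s, M s) / ENNReal.ofReal l := by
        rw [← lintegral_const_mul _ hMm]
        congr 2 with s
        rw [lintegral_mul_const _ (by fun_prop), lintegral_sub_right_eq_self, hk₀i]
    _ = _ := by
        rw [ENNReal.mul_div_right_comm, ← ENNReal.ofReal_div_of_pos hl]
        congr 2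
        have : R ^ (1 - β) = l / a := by rw [← haR]; field_simp
        rw [this, Real.rpow_neg hl.le, ← ha]
        field_simp

/-- One-sided Hardy-Littlewood-Sobolev inequality, normalized form. -/
theorem lintegral_fractionalIntegral_rpow_le {β p r : ℝ} (hβ₁ : β < 1) (hp : 1 < p)
    (hr : 0 < r) (h : 1 / p + β = 1 + 1 / r) : ∃ C : ℝ≥0∞, C ≠ ∞ ∧ ∀ m : ℝ → ℝ≥0∞, Measurable m →
      ∫⁻ s, m s ^ p ≤ 1 →
      ∫⁻ t, (∫⁻ s, (Set.Ioi 0).indicator (fun u => ENNReal.ofReal (u ^ (-β))) (t - s) * m s) ^ r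
        ≤ C := by
  obtain ⟨c, hc, H⟩ := meas_fractionalIntegral_gt_le hβ₁ hp hr h
  have hp0 : 0 < p := by linarith
  have h1β : 0 < 1 - β := by linarith
  have he : 0 < r - r / p := by
    have : r / p < r := div_lt_self hr hp
    linarith
  set K : ℝ≥0∞ := ENNReal.ofReal (1 / (1 - β)) with hK
  refine ⟨ENNReal.ofReal c ^ r * (ENNReal.ofReal r * (K * (1 / ENNReal.ofReal (r - r / p)))), ?_,
    fun m hm hm1 => ?_⟩
  · refine ENNReal.mul_ne_top (ENNReal.rpow_ne_top_of_nonneg hr.le ENNReal.ofReal_ne_top)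
      (ENNReal.mul_ne_top ENNReal.ofReal_ne_top (ENNReal.mul_ne_top ENNReal.ofReal_ne_top
        (ENNReal.div_ne_top ENNReal.one_ne_top ?_)))
    simpa using he
  set I : ℝ → ℝ≥0∞ := fun t =>
    ∫⁻ s, (Set.Ioi 0).indicator (fun u => ENNReal.ofReal (u ^ (-β))) (t - s) * m s with hI
  have hker : Measurable ((Set.Ioi (0 : ℝ)).indicator (fun u => ENNReal.ofReal (u ^ (-β)))) := by
    refine Measurable.indicator ?_ measurableSet_Ioi
    fun_prop
  have hIm : Measurable I := by
    have : Measurable fun z : ℝ × ℝ =>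
      (Set.Ioi 0).indicator (fun u => ENNReal.ofReal (u ^ (-β))) (z.1 - z.2) * m z.2 :=
      (hker.comp (by fun_prop)).mul (by fun_prop)
    exact this.lintegral_prod_right'
  have hc0 : ENNReal.ofReal c ≠ 0 := by simpa using hc
  set J : ℝ → ℝ≥0∞ := fun t => I t / ENNReal.ofReal c with hJ
  have hJm : Measurable J := hIm.div_const _
  have hIJ : ∀ t, I t = ENNReal.ofReal c * J t := fun t =>
    (ENNReal.mul_div_cancel hc0 ENNReal.ofReal_ne_top).symm
  have hmJ : Measurable fun z : ℝ × ℝ => {x : ℝ | ENNReal.ofReal x < J z.1}.indicator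
      (fun x => ENNReal.ofReal (x ^ (r - 1))) z.2 := by
    have : (fun z : ℝ × ℝ => {x : ℝ | ENNReal.ofReal x < J z.1}.indicator
        (fun x => ENNReal.ofReal (x ^ (r - 1))) z.2) =
        {z : ℝ × ℝ | ENNReal.ofReal z.2 < J z.1}.indicator
          (fun z => ENNReal.ofReal (z.2 ^ (r - 1))) := by
      ext z; simp [Set.indicator]
    rw [this]
    exact Measurable.indicator (by fun_prop) (measurableSet_lt (by fun_prop) (by fun_prop))
  have hmm : Measurable fun z : ℝ × ℝ => ENNReal.ofReal (z.1 ^ (r - r / p - 1)) *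
      {x | ENNReal.ofReal (z.1 ^ (r / p)) < x}.indicator id (m z.2) := by
    have : (fun z : ℝ × ℝ => {x | ENNReal.ofReal (z.1 ^ (r / p)) < x}.indicator id (m z.2)) =
        {z : ℝ × ℝ | ENNReal.ofReal (z.1 ^ (r / p)) < m z.2}.indicator (fun z => m z.2) := by
      ext z; simp [Set.indicator]
    refine Measurable.mul (by fun_prop) ?_
    rw [this]
    exact Measurable.indicator (by fun_prop) (measurableSet_lt (by fun_prop) (by fun_prop))
  have hinner : ∀ s, ∫⁻ l in Set.Ioi (0 : ℝ), ENNReal.ofReal (l ^ (r - r / p - 1)) *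
      {x | ENNReal.ofReal (l ^ (r / p)) < x}.indicator id (m s)
      = m s ^ p * (1 / ENNReal.ofReal (r - r / p)) := by
    intro s
    have h1 : ∀ l ∈ Set.Ioi (0 : ℝ), ENNReal.ofReal (l ^ (r - r / p - 1)) *
        {x | ENNReal.ofReal (l ^ (r / p)) < x}.indicator id (m s) =
        m s * {x : ℝ | ENNReal.ofReal x < m s ^ (p / r)}.indicator
          (fun x => ENNReal.ofReal (x ^ (r - r / p - 1))) l := by
      intro l hl
      have hl : (0 : ℝ) < l := hl
      have hiff : ENNReal.ofReal (l ^ (r / p)) < m s ↔ ENNReal.ofReal l < m s ^ (p / r) := by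
        rw [← ENNReal.ofReal_rpow_of_pos hl, ← ENNReal.rpow_lt_rpow_iff (z := p / r) (by positivity),
          ← ENNReal.rpow_mul, show r / p * (p / r) = 1 by field_simp, ENNReal.rpow_one]
      by_cases hlm : ENNReal.ofReal l < m s ^ (p / r)
      · simp [Set.indicator, hiff, hlm, mul_comm]
      · simp [Set.indicator, hiff, hlm]
    rw [setLIntegral_congr_fun measurableSet_Ioi h1, lintegral_const_mul _, lintegral_Ioi_rpow_indicator _ he,
      ← ENNReal.rpow_mul, show p / r * (r - r / p) = p - 1 by field_simp]
    · rw [← mul_div_assoc, ← mul_div_assoc, mul_one]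
      congr 1
      conv_lhs => rw [← ENNReal.rpow_one (m s), ← ENNReal.rpow_mul, one_mul]
      rw [← ENNReal.rpow_add_of_nonneg _ _ zero_le_one (by linarith)]
      congr 1; ring
    · exact Measurable.indicator (by fun_prop) (measurableSet_lt (by fun_prop) (by fun_prop))
  calc ∫⁻ t, I t ^ r = ENNReal.ofReal c ^ r * ∫⁻ t, J t ^ r := by
        rw [← lintegral_const_mul _ (by fun_prop)]
        congr 1 with t
        rw [hIJ, ENNReal.mul_rpow_of_nonneg _ _ hr.le]
    _ = ENNReal.ofReal c ^ r * (ENNReal.ofReal r * ∫⁻ t, ∫⁻ l in Set.Ioi (0 : ℝ),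
          {x : ℝ | ENNReal.ofReal x < J t}.indicator (fun x => ENNReal.ofReal (x ^ (r - 1))) l) := by
        congr 1
        rw [← lintegral_const_mul _ hmJ.lintegral_prod_right']
        congr 1 with t
        dsimp only
        rw [lintegral_Ioi_rpow_indicator _ hr, ENNReal.mul_div_cancel (by simpa using hr)
          ENNReal.ofReal_ne_top]
    _ = ENNReal.ofReal c ^ r * (ENNReal.ofReal r * ∫⁻ l in Set.Ioi (0 : ℝ), ∫⁻ t,
          {x : ℝ | ENNReal.ofReal x < J t}.indicator (fun x => ENNReal.ofReal (x ^ (r - 1))) l) := by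
        rw [lintegral_lintegral_swap hmJ.aemeasurable]
    _ ≤ ENNReal.ofReal c ^ r * (ENNReal.ofReal r * ∫⁻ l in Set.Ioi (0 : ℝ), K *
          ∫⁻ s, ENNReal.ofReal (l ^ (r - r / p - 1)) *
            {x | ENNReal.ofReal (l ^ (r / p)) < x}.indicator id (m s)) := by
        refine mul_le_mul_right (mul_le_mul_right ?_ _) _
        refine setLIntegral_mono' measurableSet_Ioi fun l hl => ?_
        have hl : (0 : ℝ) < l := hl
        have hset : {t | ENNReal.ofReal l < J t} = {t | ENNReal.ofReal (c * l) < I t} := by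
          ext t
          simp only [Set.mem_ofPred_eq, hJ]
          rw [ENNReal.lt_div_iff_mul_lt (Or.inl hc0) (Or.inl ENNReal.ofReal_ne_top),
            ENNReal.ofReal_mul hc.le, mul_comm]
        have h1 : (fun t => {x : ℝ | ENNReal.ofReal x < J t}.indicator
            (fun x => ENNReal.ofReal (x ^ (r - 1))) l) =
            {t | ENNReal.ofReal l < J t}.indicator (fun _ => ENNReal.ofReal (l ^ (r - 1))) := by
          ext t; simp [Set.indicator]
        rw [h1, lintegral_indicator_const (measurableSet_lt measurable_const hJm), hset,
          lintegral_const_mul]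
        · calc _ ≤ ENNReal.ofReal (l ^ (r - 1)) * (ENNReal.ofReal (l ^ (-(r / p)) / (1 - β)) *
                ∫⁻ s, {x | ENNReal.ofReal (l ^ (r / p)) < x}.indicator id (m s)) := by
                gcongr; exact H m hm hm1 l hl
            _ = _ := by
              rw [← mul_assoc, ← mul_assoc, hK, ← ENNReal.ofReal_mul (by positivity),
                ← ENNReal.ofReal_mul (by positivity)]
              congr 2
              rw [show r - r / p - 1 = (r - 1) + -(r / p) by ring, Real.rpow_add hl]
              ring
        · exact (measurable_id.indicator (measurableSet_lt measurable_const measurable_id)).comp hm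
    _ = ENNReal.ofReal c ^ r * (ENNReal.ofReal r * (K * ∫⁻ s, ∫⁻ l in Set.Ioi (0 : ℝ),
          ENNReal.ofReal (l ^ (r - r / p - 1)) *
            {x | ENNReal.ofReal (l ^ (r / p)) < x}.indicator id (m s))) := by
        rw [lintegral_const_mul _ hmm.lintegral_prod_right', lintegral_lintegral_swap hmm.aemeasurable]
    _ ≤ ENNReal.ofReal c ^ r * (ENNReal.ofReal r * (K * (1 / ENNReal.ofReal (r - r / p)))) := by
        refine mul_le_mul_right (mul_le_mul_right (mul_le_mul_right ?_ _) _) _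
        simp_rw [hinner]
        rw [lintegral_mul_const _ (by fun_prop)]
        exact mul_le_of_le_one_left (by simp) hm1

/-- One-sided Hardy-Littlewood-Sobolev inequality. -/
theorem fractionalIntegral_bounded {β p r : ℝ} (hβ₁ : β < 1) (hp : 1 < p)
    (hr : 0 < r) (h : 1 / p + β = 1 + 1 / r) : ∃ C : ℝ≥0∞, C ≠ ∞ ∧ ∀ m : ℝ → ℝ≥0∞, Measurable m →
      (∫⁻ t, (∫⁻ s,
        (Set.Ioi 0).indicator (fun u => ENNReal.ofReal (u ^ (-β))) (t - s) * m s) ^ r) ^ (1 / r)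
        ≤ C * (∫⁻ s, m s ^ p) ^ (1 / p) := by
  obtain ⟨C, hC, H⟩ := lintegral_fractionalIntegral_rpow_le hβ₁ hp hr h
  have hp0 : 0 < p := by linarith
  refine ⟨C ^ (1 / r) + 1, ENNReal.add_ne_top.2
    ⟨ENNReal.rpow_ne_top_of_nonneg (by positivity) hC, ENNReal.one_ne_top⟩, fun m hm => ?_⟩
  set M := (∫⁻ s, m s ^ p) ^ (1 / p) with hM
  have hMp : ∫⁻ s, m s ^ p = M ^ p := by
    rw [hM, ← ENNReal.rpow_mul, one_div_mul_cancel hp0.ne', ENNReal.rpow_one]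
  rcases eq_or_ne M ∞ with htop | htop
  · rw [htop, ENNReal.mul_top (by simp)]
    exact le_top
  rcases eq_or_ne M 0 with h0 | h0
  · rw [h0, ENNReal.zero_rpow_of_pos hp0, lintegral_eq_zero_iff (by fun_prop)] at hMp
    have hz : ∀ t : ℝ, ∫⁻ s,
        (Set.Ioi 0).indicator (fun u => ENNReal.ofReal (u ^ (-β))) (t - s) * m s = 0 := by
      intro t
      rw [← lintegral_zero (α := ℝ) (μ := volume)]
      refine lintegral_congr_ae ?_
      filter_upwards [hMp] with s hs
      have : m s = 0 := by simpa [hp0, hp0.not_gt, ENNReal.rpow_eq_zero_iff] using hs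
      rw [this, mul_zero]
    simp [hz, hr]
  have hn := H (fun s => m s / M) (hm.div_const _) (by
    have : ∀ s, (m s / M) ^ p = m s ^ p / M ^ p := fun s => ENNReal.div_rpow_of_nonneg _ _ hp0.le
    simp_rw [this, div_eq_mul_inv]
    rw [lintegral_mul_const _ (by fun_prop), hMp]
    exact ENNReal.mul_inv_le_one _)
  have hs : ∀ t : ℝ, ∫⁻ s,
      (Set.Ioi 0).indicator (fun u => ENNReal.ofReal (u ^ (-β))) (t - s) * m s = M * ∫⁻ s,
      (Set.Ioi 0).indicator (fun u => ENNReal.ofReal (u ^ (-β))) (t - s) * (m s / M) := by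
    intro t
    rw [← lintegral_const_mul' _ _ htop]
    congr 1 with s
    rw [mul_left_comm, ENNReal.mul_div_cancel h0 htop]
  simp_rw [hs, ENNReal.mul_rpow_of_nonneg _ _ hr.le]
  rw [lintegral_const_mul' _ _ (ENNReal.rpow_ne_top_of_nonneg hr.le htop),
    ENNReal.mul_rpow_of_nonneg _ _ (by positivity), ← ENNReal.rpow_mul, mul_one_div_cancel hr.ne',
    ENNReal.rpow_one, mul_comm]
  gcongr
  exact (ENNReal.rpow_le_rpow hn (by positivity)).trans le_self_add

/-! ### Minkowski's integral inequality without joint measurability -/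

section Minkowski

variable {α X V : Type*} [MeasurableSpace α] [MetricSpace X] [SecondCountableTopology X]
  [MeasurableSpace X] [BorelSpace X] [NormedAddCommGroup V] [NormedSpace ℝ V]

/-- A function which is measurable in one variable (for the points of `S`) and continuous in the
other one (outside a set `φ = ∞` containing no non-null measurable set) has a jointly measurable
modification. -/
theorem exists_measurable_modification {μ : Measure α} {S : Set X} (hS : S.Nonempty)
    {P : α → X → ℝ≥0∞} {φ k : α → ℝ≥0∞}
    (hk : ∀ h : α → ℝ≥0∞, AEMeasurable h μ → h ≤ᵐ[μ] φ → h ≤ᵐ[μ] k)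
    (hkt : ∀ᵐ s ∂μ, k s ≠ ∞)
    (hP : ∀ x ∈ S, AEMeasurable (fun s => P s x) μ)
    (hc : ∀ᵐ s ∂μ, φ s ≠ ∞ → Continuous (P s)) :
    ∃ H : α × X → ℝ≥0∞, Measurable H ∧ (∀ x ∈ S, ∀ᵐ s ∂μ, H (s, x) = P s x) ∧
      ∀ᵐ s ∂μ, φ s ≠ ∞ → ∀ x ∈ S, H (s, x) = P s x := by
  classical
  obtain ⟨x₀, hx₀⟩ := hS
  set Q : X → α → ℝ≥0∞ := fun x => if hx : x ∈ S then (hP x hx).mk _ else 0 with hQ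
  have hQm : ∀ x, Measurable (Q x) := by
    intro x
    by_cases hx : x ∈ S
    · simpa [hQ, hx] using (hP x hx).measurable_mk
    · simp only [hQ, hx, dite_false]; exact measurable_zero
  have hQP : ∀ x ∈ S, ∀ᵐ s ∂μ, Q x s = P s x := by
    intro x hx
    filter_upwards [(hP x hx).ae_eq_mk] with s hs
    simp [hQ, hx, hs]
  set A : ℕ → SimpleFunc (α × X) X := fun n =>
    SimpleFunc.approxOn Prod.snd measurable_snd S x₀ hx₀ n with hA
  set H : α × X → ℝ≥0∞ := fun z => Filter.liminf (fun n => Q (A n z) z.1) Filter.atTop with hH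
  have hHm : Measurable H := by
    refine Measurable.liminf fun n => ?_
    exact SimpleFunc.measurable_bind (A n) (fun b z => Q b z.1)
      fun b => (hQm b).comp measurable_fst
  have hgood : ∀ᵐ s ∂μ, φ s ≠ ∞ → ∀ x ∈ S, H (s, x) = P s x := by
    have h1 : ∀ᵐ s ∂μ, ∀ n, ∀ d ∈ (A n).range, Q d s = P s d := by
      rw [ae_all_iff]
      intro n
      rw [Filter.eventually_all_finset]
      intro d hd
      obtain ⟨z, rfl⟩ := SimpleFunc.mem_range.1 hd
      exact hQP _ (SimpleFunc.approxOn_mem measurable_snd hx₀ n z)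
    filter_upwards [h1, hc] with s hs hcs hφ x hx
    have : ∀ n, Q (A n (s, x)) s = P s (A n (s, x)) := fun n =>
      hs n _ (SimpleFunc.mem_range_self _ _)
    simp only [hH, this]
    refine Filter.Tendsto.liminf_eq ?_
    exact ((hcs hφ).tendsto x).comp
      (SimpleFunc.tendsto_approxOn measurable_snd hx₀ (subset_closure hx))
  refine ⟨H, hHm, fun x hx => ?_, hgood⟩
  have hHx : Measurable fun s => H (s, x) := hHm.comp (by fun_prop)
  set B : Set α := {s | H (s, x) ≠ Q x s} with hB
  have hBm : MeasurableSet B := (measurableSet_eq_fun hHx (hQm x)).compl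
  have := hk (B.indicator fun _ => ∞) (aemeasurable_const.indicator hBm) (by
    filter_upwards [hgood, hQP x hx] with s hs hq
    by_cases hφ : φ s = ∞
    · simp [hφ]
    · have : s ∉ B := fun h => h ((hs hφ x hx).trans hq.symm)
      simp [this])
  filter_upwards [this, hkt, hQP x hx] with s h1 h2 h3
  by_contra h4
  have : s ∈ B := fun h => h4 (h.trans h3)
  rw [Set.indicator_of_mem this] at h1
  exact h2 (top_le_iff.1 h1)

theorem eLpNorm_integral_le_of_minorant {μ : Measure α} [SFinite μ] {ν : Measure X} [SigmaFinite ν]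
    {F : α → X → V} {φ k : α → ℝ≥0∞} {q : ℝ} (hq : 1 ≤ q)
    (hk : ∀ h : α → ℝ≥0∞, AEMeasurable h μ → h ≤ᵐ[μ] φ → h ≤ᵐ[μ] k)
    (hkt : ∀ᵐ s ∂μ, k s ≠ ∞)
    (hF : ∀ᵐ s ∂μ, φ s ≠ ∞ → Continuous (F s) ∧ (∫⁻ x, ‖F s x‖ₑ ^ q ∂ν) ^ (1 / q) ≤ φ s) :
    (∫⁻ x, ‖∫ s, F s x ∂μ‖ₑ ^ q ∂ν) ^ (1 / q) ≤ ∫⁻ s, k s ∂μ := by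
  have hq0 : 0 < q := by linarith
  rw [one_div, ENNReal.rpow_inv_le_iff hq0]
  have hnn : ∀ x, ‖∫ s, F s x ∂μ‖ₑ ^ q = ((‖∫ s, F s x ∂μ‖₊ ^ q : NNReal) : ℝ≥0∞) := by
    intro x
    rw [ENNReal.coe_rpow_of_nonneg _ hq0.le]; rfl
  simp_rw [hnn]
  refine le_of_forall_lt fun L hL => ?_
  obtain ⟨g, hg, hgt, hLg⟩ := exists_lt_lintegral_simpleFunc_of_lt_lintegral hL
  refine hLg.trans_le ?_
  clear hL hLg
  set Γ : ℝ≥0∞ := ∫⁻ x, g x ∂ν with hΓ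
  rcases eq_or_ne Γ 0 with h0 | h0
  · rw [h0]; exact zero_le
  set S : Set X := {x | g x ≠ 0} with hSdef
  have hSm : MeasurableSet S := g.measurableSet_preimage {0}ᶜ
  have hSne : S.Nonempty := by
    by_contra hne
    refine h0 ?_
    have : ∀ x, g x = 0 := fun x => by
      by_contra hx
      exact hne ⟨x, hx⟩
    simp [hΓ, this]
  have hSint : ∀ x ∈ S, Integrable (fun s => F s x) μ := by
    intro x hx
    by_contra hni
    have := hg x
    rw [integral_undef hni] at this
    simp only [nnnorm_zero, NNReal.zero_rpow hq0.ne'] at this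
    exact hx (le_antisymm this (zero_le))
  obtain ⟨H, hHm, hH1, hH2⟩ := exists_measurable_modification (P := fun s x => ‖F s x‖ₑ) hSne hk hkt
    (fun x hx => (hSint x hx).aestronglyMeasurable.enorm)
    (by filter_upwards [hF] with s hs hφ using (hs hφ).1.enorm)
  have hgE : Measurable fun x => (g x : ℝ≥0∞) := g.measurable.coe_nnreal_ennreal
  have hq1 : 0 ≤ 1 - 1 / q := by
    have : 1 / q ≤ 1 := by rw [div_le_one hq0]; exact hq
    linarith
  set w : X → ℝ≥0∞ := S.indicator fun x => (g x : ℝ≥0∞) ^ (1 - 1 / q) with hw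
  have hwm : Measurable w := (hgE.pow_const _).indicator hSm
  have hwle : ∀ x, w x ≤ (g x : ℝ≥0∞) ^ (1 - 1 / q) := fun x => Set.indicator_le_self _ _ _
  set W : ℝ≥0∞ := Γ ^ (1 - 1 / q) with hW
  have hW0 : W ≠ 0 := by simp [hW, ENNReal.rpow_eq_zero_iff, h0, hgt.ne]
  have hWt : W ≠ ∞ := ENNReal.rpow_ne_top_of_nonneg hq1 hgt.ne
  have hjoint : Measurable fun z : X × α => H (z.2, z.1) * w z.1 := by fun_prop
  have hh : (fun s => (∫⁻ x, H (s, x) * w x ∂ν) / W) ≤ᵐ[μ] k := by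
    refine hk _ ?_ ?_
    · have : Measurable fun z : α × X => H z * w z.2 := by fun_prop
      exact (this.lintegral_prod_right'.div_const _).aemeasurable
    · filter_upwards [hF, hH2] with s hs hHs
      by_cases hφ : φ s = ∞
      · simp [hφ]
      refine ENNReal.div_le_of_le_mul ?_
      calc ∫⁻ x, H (s, x) * w x ∂ν
          ≤ ∫⁻ x, (‖F s x‖ₑ ^ q) ^ (1 / q) * (g x : ℝ≥0∞) ^ (1 - 1 / q) ∂ν := by
            refine lintegral_mono fun x => ?_
            dsimp only
            by_cases hx : x ∈ S
            · rw [hHs hφ x hx, ← ENNReal.rpow_mul, mul_one_div_cancel hq0.ne', ENNReal.rpow_one]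
              gcongr
              exact hwle x
            · simp [hw, hx]
        _ ≤ (∫⁻ x, ‖F s x‖ₑ ^ q ∂ν) ^ (1 / q) * (∫⁻ x, g x ∂ν) ^ (1 - 1 / q) :=
            ENNReal.lintegral_mul_norm_pow_le
              ((hs hφ).1.enorm.measurable.pow_const _).aemeasurable
              hgE.aemeasurable (by positivity) hq1 (by ring)
        _ ≤ φ s * W := by gcongr; exact (hs hφ).2
  have hmain : Γ ≤ W * ∫⁻ s, k s ∂μ := by
    calc Γ ≤ ∫⁻ x, ∫⁻ s, H (s, x) * w x ∂μ ∂ν := by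
          refine lintegral_mono fun x => ?_
          dsimp only
          by_cases hx : x ∈ S
          · have hgx : (g x : ℝ≥0∞) ≠ 0 := ENNReal.coe_ne_zero.2 hx
            rw [lintegral_mul_const _ (show Measurable fun s => H (s, x) by fun_prop),
              lintegral_congr_ae (hH1 x hx)]
            have h1 : (g x : ℝ≥0∞) ^ (1 / q) ≤ ‖∫ s, F s x ∂μ‖ₑ := by
              rw [one_div, ENNReal.rpow_inv_le_iff hq0, hnn]
              exact_mod_cast hg x
            calc (g x : ℝ≥0∞) = (g x : ℝ≥0∞) ^ (1 / q) * (g x : ℝ≥0∞) ^ (1 - 1 / q) := by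
                  rw [← ENNReal.rpow_add _ _ hgx ENNReal.coe_ne_top]; simp
              _ ≤ _ := by
                  rw [hw, Set.indicator_of_mem hx]
                  gcongr
                  exact h1.trans (enorm_integral_le_lintegral_enorm _)
          · have : g x = 0 := by simpa [hSdef] using hx
            simp [this]
      _ = ∫⁻ s, ∫⁻ x, H (s, x) * w x ∂ν ∂μ := lintegral_lintegral_swap hjoint.aemeasurable
      _ ≤ ∫⁻ s, W * k s ∂μ := by
          refine lintegral_mono_ae ?_
          filter_upwards [hh] with s hs
          rw [mul_comm]
          exact (ENNReal.div_le_iff hW0 hWt).1 hs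
      _ = W * ∫⁻ s, k s ∂μ := lintegral_const_mul' _ _ hWt
  rw [← ENNReal.rpow_inv_le_iff hq0]
  have hWinv : Γ = W * Γ ^ q⁻¹ := by
    rw [hW, ← ENNReal.rpow_add _ _ h0 hgt.ne]; simp
  rw [hWinv] at hmain
  exact (ENNReal.mul_le_mul_iff_right hW0 hWt).1 hmain

theorem enorm_integral_le_of_minorant {μ : Measure α} {F : α → V} {φ k : α → ℝ≥0∞}
    (hk : ∀ h : α → ℝ≥0∞, AEMeasurable h μ → h ≤ᵐ[μ] φ → h ≤ᵐ[μ] k)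
    (hF : ∀ᵐ s ∂μ, ‖F s‖ₑ ≤ φ s) : ‖∫ s, F s ∂μ‖ₑ ≤ ∫⁻ s, k s ∂μ := by
  by_cases hi : Integrable F μ
  · exact (enorm_integral_le_lintegral_enorm _).trans
      (lintegral_mono_ae (hk _ hi.aestronglyMeasurable.enorm hF))
  · simp [integral_undef hi]

end Minkowski

/-! ### Young's convolution inequality -/

section Young

variable {E : Type*} [AddCommGroup E] [MeasurableSpace E] [MeasurableAdd₂ E] [MeasurableNeg E]
  {μ : Measure E} [μ.IsAddLeftInvariant] [μ.IsNegInvariant]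

theorem lintegral_mul_sub_le {f g : E → ℝ≥0∞} (hf : AEMeasurable f μ)
    (hg : Measurable g) {p q b : ℝ} (hq : 1 ≤ q) (hb : 0 ≤ b) (hbq : b ≤ 1 / q) (hp : 0 < p)
    (hpq : 1 / p = 1 - 1 / q + b) (x : E) :
    ∫⁻ y, f y * g (x - y) ∂μ ≤ (∫⁻ y, f y ^ q * g (x - y) ^ p ∂μ) ^ b *
      (∫⁻ y, f y ^ q ∂μ) ^ (1 / q - b) * (∫⁻ y, g y ^ p ∂μ) ^ (1 - 1 / q) := by
  have hq0 : 0 < q := by linarith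
  have hq1 : 1 / q ≤ 1 := by rw [div_le_one hq0]; exact hq
  have hgx : Measurable fun y => g (x - y) := hg.comp (by fun_prop)
  have key := ENNReal.lintegral_prod_norm_pow_le (μ := μ) (Finset.univ : Finset (Fin 3))
    (f := ![fun y => f y ^ q * g (x - y) ^ p, fun y => f y ^ q, fun y => g (x - y) ^ p])
    (p := ![b, 1 / q - b, 1 - 1 / q])
    (by
      intro i _
      fin_cases i
      · exact (hf.pow_const _).mul (hgx.pow_const _).aemeasurable
      · exact hf.pow_const _
      · exact (hgx.pow_const _).aemeasurable)
    (by simp [Fin.sum_univ_three])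
    (by
      intro i _
      fin_cases i
      · exact hb
      · simpa using hbq
      · simpa using hq1)
  simp only [Fin.prod_univ_three, Matrix.cons_val_zero, Matrix.cons_val_one, Matrix.cons_val] at key
  rw [lintegral_sub_left_eq_self (fun y => g y ^ p)] at key
  refine le_trans (le_of_eq ?_) key
  congr 1 with y
  rw [ENNReal.mul_rpow_of_nonneg _ _ hb, ← ENNReal.rpow_mul, ← ENNReal.rpow_mul,
    ← ENNReal.rpow_mul, ← ENNReal.rpow_mul]
  have h1 : f y = f y ^ (q * b) * f y ^ (q * (1 / q - b)) := by
    rw [← ENNReal.rpow_add_of_nonneg _ _ (by positivity)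
      (mul_nonneg hq0.le (by linarith)), show q * b + q * (1 / q - b) = 1 by field_simp; ring,
      ENNReal.rpow_one]
  have h2 : g (x - y) = g (x - y) ^ (p * b) * g (x - y) ^ (p * (1 - 1 / q)) := by
    rw [← ENNReal.rpow_add_of_nonneg _ _ (by positivity)
      (mul_nonneg hp.le (by linarith)), show p * b + p * (1 - 1 / q) = p * (1 - 1 / q + b) by ring,
      ← hpq, mul_one_div_cancel hp.ne', ENNReal.rpow_one]
  conv_lhs => rw [h1, h2]
  ring

/-- Young's convolution inequality for nonnegative functions. -/
theorem lintegral_conv_rpow_le [SFinite μ] {f g : E → ℝ≥0∞} (hf : AEMeasurable f μ)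
    (hg : Measurable g) {p q r : ℝ} (hq : 1 ≤ q) (hqr : q ≤ r) (hp : 0 < p)
    (hpq : 1 / p = 1 - 1 / q + 1 / r) :
    (∫⁻ x, (∫⁻ y, f y * g (x - y) ∂μ) ^ r ∂μ) ^ (1 / r) ≤
      (∫⁻ y, f y ^ q ∂μ) ^ (1 / q) * (∫⁻ y, g y ^ p ∂μ) ^ (1 / p) := by
  have hq0 : 0 < q := by linarith
  have hr0 : 0 < r := by linarith
  have hq1 : 1 / q ≤ 1 := by rw [div_le_one hq0]; exact hq
  have hrq : 1 / r ≤ 1 / q := one_div_le_one_div_of_le hq0 hqr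
  set A := ∫⁻ y, f y ^ q ∂μ with hA
  set D := ∫⁻ y, g y ^ p ∂μ with hD
  have hbound : ∀ x, (∫⁻ y, f y * g (x - y) ∂μ) ^ r ≤
      (∫⁻ y, f y ^ q * g (x - y) ^ p ∂μ) * (A ^ (1 / q - 1 / r) * D ^ (1 - 1 / q)) ^ r := by
    intro x
    refine (ENNReal.rpow_le_rpow
      (lintegral_mul_sub_le hf hg hq (by positivity) hrq hp hpq x) hr0.le).trans (le_of_eq ?_)
    rw [mul_assoc, ENNReal.mul_rpow_of_nonneg _ _ hr0.le, ← ENNReal.rpow_mul,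
      one_div_mul_cancel hr0.ne', ENNReal.rpow_one]
  have hjoint : AEMeasurable (fun z : E × E => f z.2 ^ q * g (z.1 - z.2) ^ p) (μ.prod μ) := by
    refine AEMeasurable.mul ?_ (by fun_prop)
    exact (hf.comp_quasiMeasurePreserving Measure.quasiMeasurePreserving_snd).pow_const _
  have hAD : ∫⁻ x, ∫⁻ y, f y ^ q * g (x - y) ^ p ∂μ ∂μ = A * D := by
    rw [lintegral_lintegral_swap hjoint, hA, ← lintegral_mul_const'' _ (hf.pow_const _)]
    congr 1 with y
    rw [lintegral_const_mul _ (by fun_prop), lintegral_sub_right_eq_self (fun y => g y ^ p)]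
  rw [one_div, ENNReal.rpow_inv_le_iff hr0]
  calc _ ≤ ∫⁻ x, (∫⁻ y, f y ^ q * g (x - y) ^ p ∂μ) *
        (A ^ (1 / q - 1 / r) * D ^ (1 - 1 / q)) ^ r ∂μ := lintegral_mono hbound
    _ = (A * D) * (A ^ (1 / q - 1 / r) * D ^ (1 - 1 / q)) ^ r := by
        rw [lintegral_mul_const'' _ hjoint.lintegral_prod_right', hAD]
    _ = ((A * D) ^ (1 / r) * (A ^ (1 / q - 1 / r) * D ^ (1 - 1 / q))) ^ r := by
        rw [ENNReal.mul_rpow_of_nonneg ((A * D) ^ (1 / r)) _ hr0.le, ← ENNReal.rpow_mul (A * D),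
          one_div_mul_cancel hr0.ne', ENNReal.rpow_one]
    _ = _ := by
        congr 1
        have h1r : 0 ≤ 1 / r := by positivity
        rw [ENNReal.mul_rpow_of_nonneg _ _ h1r, mul_mul_mul_comm,
          ← ENNReal.rpow_add_of_nonneg _ _ h1r (by linarith),
          ← ENNReal.rpow_add_of_nonneg _ _ h1r (by linarith), hpq]
        congr 2 <;> ring

end Young

/-! ### Bounds for the gradient of the heat kernel -/

theorem gradient_heatKernel (N : ℕ) (t : ℝ) (z : EuclideanSpace ℝ (Fin N)) :
    gradient (heatKernel N t) z = (-(heatKernel N t z / (2 * t))) • z := by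
  refine HasGradientAt.gradient ?_
  rw [hasGradientAt_iff_hasFDerivAt]
  have h := (((hasStrictFDerivAt_norm_sq z).hasFDerivAt.neg.mul_const (4 * t)⁻¹).exp).const_mul
    ((4 * π * t) ^ (-(N : ℝ) / 2))
  refine h.congr_fderiv ?_
  ext v
  simp only [heatKernel, div_eq_mul_inv, smul_eq_mul, smul_apply,
    neg_apply, InnerProductSpace.toDual_apply_apply, inner_smul_left,
    innerSL_apply_apply, nsmul_eq_mul, mul_inv]
  simp
  ring

/-- A Gaussian dominating the gradient of the heat kernel. -/
def heatMajorant (N : ℕ) (t : ℝ) (z : EuclideanSpace ℝ (Fin N)) : ℝ :=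
  (4 * π) ^ (-(N : ℝ) / 2) * √2 * t ^ (-((N : ℝ) + 1) / 2) * Real.exp (-(1 / (8 * t)) * ‖z‖ ^ 2)

theorem heatMajorant_nonneg {N : ℕ} {t : ℝ} (ht : 0 < t) (z : EuclideanSpace ℝ (Fin N)) :
    0 ≤ heatMajorant N t z := by
  unfold heatMajorant; positivity

theorem continuous_heatMajorant (N : ℕ) (t : ℝ) : Continuous (heatMajorant N t) := by
  unfold heatMajorant; fun_prop

theorem continuous_heatKernel (N : ℕ) (t : ℝ) : Continuous (heatKernel N t) := by
  unfold heatKernel; fun_prop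

theorem continuous_gradient_heatKernel (N : ℕ) (t : ℝ) :
    Continuous (gradient (heatKernel N t)) := by
  have : gradient (heatKernel N t) = fun z => (-(heatKernel N t z / (2 * t))) • z :=
    funext (gradient_heatKernel N t)
  rw [this]
  have := continuous_heatKernel N t
  fun_prop

theorem norm_gradient_heatKernel_le {N : ℕ} {t : ℝ} (ht : 0 < t) (z : EuclideanSpace ℝ (Fin N)) :
    ‖gradient (heatKernel N t) z‖ ≤ heatMajorant N t z := by
  rw [gradient_heatKernel, norm_smul, Real.norm_eq_abs, abs_neg, abs_of_nonneg
    (by unfold heatKernel; positivity)]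
  unfold heatKernel heatMajorant
  set u : ℝ := 1 / (8 * t) * ‖z‖ ^ 2 with hu
  have hu0 : 0 ≤ u := by positivity
  have hz : ‖z‖ = √(8 * t) * √u := by
    rw [← Real.sqrt_mul (by positivity), hu, ← mul_assoc, mul_one_div_cancel (by positivity),
      one_mul, Real.sqrt_sq (norm_nonneg _)]
  have hsu : √u ≤ Real.exp u := by
    have h1 := Real.add_one_le_exp u
    have h2 : √u ≤ u + 1 := by
      nlinarith [Real.sq_sqrt hu0, sq_nonneg (√u - 1), Real.sqrt_nonneg u]
    linarith
  have he : Real.exp (-‖z‖ ^ 2 / (4 * t)) = Real.exp (-u) * Real.exp (-u) := by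
    rw [← Real.exp_add, hu]; congr 1; field_simp; ring
  have hsq : √(8 * t) = 2 * √2 * √t := by
    rw [show 8 * t = 2 ^ 2 * (2 * t) by ring, Real.sqrt_mul (by positivity),
      Real.sqrt_sq (by positivity), Real.sqrt_mul (by positivity)]
    ring
  have ht2 : t ^ (-((N : ℝ) + 1) / 2) = t ^ (-(N : ℝ) / 2) * (√t / t) := by
    rw [Real.sqrt_eq_rpow, ← Real.rpow_sub_one ht.ne', ← Real.rpow_add ht]
    congr 1; ring
  have hmul : Real.exp (-u) * √u ≤ 1 := by
    rw [Real.exp_neg, inv_mul_le_one₀ (Real.exp_pos _)]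
    exact hsu
  rw [Real.mul_rpow (by positivity) ht.le, he, ht2, show -(1 / (8 * t)) * ‖z‖ ^ 2 = -u by rw [hu]; ring,
    hz, hsq]
  set P := (4 * π) ^ (-(N : ℝ) / 2) * √2 * (t ^ (-(N : ℝ) / 2) * (√t / t)) * Real.exp (-u) with hP
  have hP0 : 0 ≤ P := by positivity
  calc _ = P * (Real.exp (-u) * √u) := by rw [hP]; field_simp
    _ ≤ P * 1 := by gcongr
    _ = P := mul_one _

theorem integrable_exp_neg_mul_norm_sq {N : ℕ} {b : ℝ} (hb : 0 < b) :
    Integrable fun v : EuclideanSpace ℝ (Fin N) => Real.exp (-b * ‖v‖ ^ 2) := by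
  refine Integrable.of_integral_ne_zero ?_
  rw [GaussianFourier.integral_rexp_neg_mul_sq_norm hb]
  positivity

theorem lintegral_heatMajorant_rpow {N : ℕ} {t p : ℝ} (ht : 0 < t) (hp : 0 < p) :
    (∫⁻ z, ENNReal.ofReal (heatMajorant N t z) ^ p) ^ (1 / p) =
      ENNReal.ofReal ((4 * π) ^ (-(N : ℝ) / 2) * √2 * (8 * π / p) ^ ((N : ℝ) / 2 * (1 / p)) *
        t ^ (-(1 / 2 + (N : ℝ) / 2 * (1 - 1 / p)))) := by
  set c : ℝ := (4 * π) ^ (-(N : ℝ) / 2) * √2 * t ^ (-((N : ℝ) + 1) / 2) with hc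
  have hc0 : 0 ≤ c := by positivity
  have h1 : ∀ z : EuclideanSpace ℝ (Fin N), ENNReal.ofReal (heatMajorant N t z) ^ p =
      ENNReal.ofReal (c ^ p) * ENNReal.ofReal (Real.exp (-(p / (8 * t)) * ‖z‖ ^ 2)) := by
    intro z
    rw [ENNReal.ofReal_rpow_of_nonneg (heatMajorant_nonneg ht z) hp.le,
      ← ENNReal.ofReal_mul (by positivity), heatMajorant, ← hc, Real.mul_rpow hc0 (by positivity),
      ← Real.exp_mul]
    congr 3; ring
  simp_rw [h1]
  rw [lintegral_const_mul _ (by fun_prop), ← ofReal_integral_eq_lintegral_ofReal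
    (integrable_exp_neg_mul_norm_sq (by positivity))
    (Filter.Eventually.of_forall fun z => (Real.exp_pos _).le),
    GaussianFourier.integral_rexp_neg_mul_sq_norm (by positivity), finrank_euclideanSpace_fin,
    ← ENNReal.ofReal_mul (by positivity), ENNReal.ofReal_rpow_of_nonneg (by positivity) (by positivity),
    Real.mul_rpow (by positivity) (by positivity), ← Real.rpow_mul hc0, mul_one_div_cancel hp.ne',
    Real.rpow_one, ← Real.rpow_mul (by positivity),
    show π / (p / (8 * t)) = 8 * π / p * t by field_simp, Real.mul_rpow (by positivity) ht.le, hc]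
  congr 1
  rw [show -(1 / 2 + (N : ℝ) / 2 * (1 - 1 / p)) = -((N : ℝ) + 1) / 2 + (N : ℝ) / 2 * (1 / p) by ring,
    Real.rpow_add ht]
  ring

theorem aestronglyMeasurable_of_integrable_smul_gradient {N : ℕ} (hN : 0 < N) {t : ℝ} (ht : 0 < t)
    {f : EuclideanSpace ℝ (Fin N) → ℝ} {x : EuclideanSpace ℝ (Fin N)}
    (h : Integrable fun y => f y • gradient (heatKernel N t) (x - y)) :
    AEStronglyMeasurable f := by
  have : NeZero N := ⟨hN.ne'⟩
  set ψ : EuclideanSpace ℝ (Fin N) → ℝ := fun y =>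
    inner ℝ (gradient (heatKernel N t) (x - y)) (x - y) with hψ
  have hψc : Continuous ψ := by
    have := continuous_gradient_heatKernel N t
    fun_prop
  have h1 : AEMeasurable fun y => inner ℝ (f y • gradient (heatKernel N t) (x - y)) (x - y) :=
    (h.aestronglyMeasurable.inner (by fun_prop : Continuous fun y => x - y).aestronglyMeasurable).aemeasurable
  have h2 := h1.div hψc.measurable.aemeasurable
  refine (h2.congr ?_).aestronglyMeasurable
  have hne : ∀ᵐ y : EuclideanSpace ℝ (Fin N), y ≠ x :=
    compl_mem_ae_iff.2 (measure_singleton x)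
  filter_upwards [hne] with y hy
  have hψ0 : ψ y ≠ 0 := by
    simp only [hψ, gradient_heatKernel, inner_smul_left, real_inner_self_eq_norm_sq]
    have : 0 < heatKernel N t (x - y) := by unfold heatKernel; positivity
    have h3 : ‖x - y‖ ≠ 0 := norm_ne_zero_iff.2 (sub_ne_zero.2 hy.symm)
    have h4 : -(heatKernel N t (x - y) / (2 * t)) ≠ 0 := neg_ne_zero.2 (by positivity)
    simpa using mul_ne_zero h4 (pow_ne_zero 2 h3)
  simp only [Pi.div_apply, real_inner_smul_left]
  exact mul_div_cancel_right₀ _ hψ0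

theorem enorm_heatGradConv_le {N : ℕ} {t : ℝ} (ht : 0 < t) (f : EuclideanSpace ℝ (Fin N) → ℝ)
    (x : EuclideanSpace ℝ (Fin N)) :
    ‖∫ y, f y • gradient (heatKernel N t) (x - y)‖ₑ ≤
      ∫⁻ y, ‖f y‖ₑ * ENNReal.ofReal (heatMajorant N t (x - y)) := by
  refine (enorm_integral_le_lintegral_enorm _).trans (lintegral_mono fun y => ?_)
  rw [enorm_smul]
  gcongr
  rw [← ofReal_norm]
  exact ENNReal.ofReal_le_ofReal (norm_gradient_heatKernel_le ht _)

theorem continuous_heatGradConv {N : ℕ} {t : ℝ} (ht : 0 < t) {q : ℝ≥0∞} (hq : 1 ≤ q)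
    {f : EuclideanSpace ℝ (Fin N) → ℝ} (hf : MemLp f q) :
    Continuous fun x => ∫ y, f y • gradient (heatKernel N t) (x - y) := by
  have hgc := continuous_gradient_heatKernel N t
  rw [continuous_iff_continuousAt]
  intro x₀
  set e : EuclideanSpace ℝ (Fin N) → ℝ := fun y => Real.exp (-(1 / (16 * t)) * ‖x₀ - y‖ ^ 2) with he
  have hei : Integrable e :=
    (integrable_exp_neg_mul_norm_sq (N := N) (b := 1 / (16 * t)) (by positivity)).comp_sub_left x₀
  have hfe : ∃ b : EuclideanSpace ℝ (Fin N) → ℝ, Integrable b ∧ ∀ᵐ y, ‖f y‖ * e y ≤ b y := by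
    rcases eq_or_ne q ∞ with rfl | hqt
    · refine ⟨fun y => (eLpNorm f ∞ volume).toReal * e y, hei.const_mul _, ?_⟩
      filter_upwards [enorm_ae_le_eLpNormEssSup f volume] with y hy
      rw [← eLpNorm_exponent_top] at hy
      have : ‖f y‖ ≤ (eLpNorm f ∞ volume).toReal := by
        rw [← toReal_enorm]
        exact ENNReal.toReal_mono hf.2.ne hy
      have h0 : 0 ≤ e y := (Real.exp_pos _).le
      gcongr
    · refine ⟨fun y => ‖f y‖ ^ q.toReal + e y,
        (hf.integrable_norm_rpow (by positivity) hqt).add hei, .of_forall fun y => ?_⟩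
      have h0 : 0 ≤ e y := (Real.exp_pos _).le
      have h1 : e y ≤ 1 := Real.exp_le_one_iff.2 (by
        rw [neg_mul]; exact neg_nonpos.2 (by positivity))
      rcases le_total ‖f y‖ 1 with h | h
      · have := mul_le_of_le_one_left h0 h
        have h2 : 0 ≤ ‖f y‖ ^ q.toReal := by positivity
        dsimp only
        linarith
      · have hq1 : 1 ≤ q.toReal := by
          have := ENNReal.toReal_mono hqt hq
          simpa using this
        have h2 := Real.rpow_le_rpow_of_exponent_le h hq1
        rw [Real.rpow_one] at h2
        have := mul_le_of_le_one_right (norm_nonneg (f y)) h1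
        dsimp only
        linarith
  obtain ⟨b, hb, hfb⟩ := hfe
  set c : ℝ := (4 * π) ^ (-(N : ℝ) / 2) * √2 * t ^ (-((N : ℝ) + 1) / 2) * Real.exp (1 / (8 * t)) with hc
  refine continuousAt_of_dominated (bound := fun y => c * b y) ?_ ?_ (hb.const_mul _) ?_
  · refine .of_forall fun x => hf.1.smul ?_
    exact (hgc.comp (by fun_prop)).aestronglyMeasurable
  · filter_upwards [Metric.ball_mem_nhds x₀ one_pos] with x hx
    filter_upwards [hfb] with y hy
    rw [norm_smul]
    have hx1 : ‖x₀ - x‖ ≤ 1 := by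
      rw [← dist_eq_norm, dist_comm]; exact (Metric.mem_ball.1 hx).le
    have hsq : ‖x₀ - y‖ ^ 2 ≤ 2 * ‖x - y‖ ^ 2 + 2 := by
      have h3 : ‖x₀ - y‖ ≤ ‖x₀ - x‖ + ‖x - y‖ := norm_sub_le_norm_sub_add_norm_sub _ _ _
      nlinarith [norm_nonneg (x₀ - y), norm_nonneg (x - y), norm_nonneg (x₀ - x),
        sq_nonneg (‖x - y‖ - 1)]
    have hm : heatMajorant N t (x - y) ≤ c * e y := by
      rw [heatMajorant, hc, he, mul_assoc _ (Real.exp (1 / (8 * t))), ← Real.exp_add]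
      gcongr
      have : 1 / (8 * t) + -(1 / (16 * t)) * ‖x₀ - y‖ ^ 2 - (-(1 / (8 * t)) * ‖x - y‖ ^ 2) =
        1 / (16 * t) * (2 * ‖x - y‖ ^ 2 + 2 - ‖x₀ - y‖ ^ 2) := by field_simp; ring
      have h5 : 0 ≤ 1 / (16 * t) * (2 * ‖x - y‖ ^ 2 + 2 - ‖x₀ - y‖ ^ 2) :=
        mul_nonneg (by positivity) (by linarith)
      linarith
    calc ‖f y‖ * ‖gradient (heatKernel N t) (x - y)‖ ≤ ‖f y‖ * (c * e y) := by
          gcongr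
          exact (norm_gradient_heatKernel_le ht _).trans hm
      _ = c * (‖f y‖ * e y) := by ring
      _ ≤ c * b y := by gcongr
  · refine .of_forall fun y => ?_
    have : Continuous fun x => f y • gradient (heatKernel N t) (x - y) := by fun_prop
    exact this.continuousAt

/-- `L^q₁ → L^q₂` smoothing of the gradient of the heat semigroup. -/
theorem heatGradConv_bounded {N : ℕ} (hN : 0 < N) {q₁ q₂ : ℝ≥0∞} (hq₁ : 1 ≤ q₁) (hq₁₂ : q₁ ≤ q₂)
    (hcond : (N : ℝ) / 2 * (1 / q₁.toReal - 1 / q₂.toReal) + 1 / 2 < 1) :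
    ∃ K : ℝ, 0 < K ∧ ∀ t : ℝ, 0 < t → ∀ f : EuclideanSpace ℝ (Fin N) → ℝ,
      (q₂ = ∞ → ∀ x, ‖∫ y, f y • gradient (heatKernel N t) (x - y)‖ₑ ≤ ENNReal.ofReal
        (K * t ^ (-(1 / 2 + (N : ℝ) / 2 * (1 / q₁.toReal - 1 / q₂.toReal)))) *
          eLpNorm f q₁ volume) ∧
      (q₂ ≠ ∞ → (∫⁻ x, ‖∫ y, f y • gradient (heatKernel N t) (x - y)‖ₑ ^ q₂.toReal) ^
        (1 / q₂.toReal) ≤ ENNReal.ofReal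
        (K * t ^ (-(1 / 2 + (N : ℝ) / 2 * (1 / q₁.toReal - 1 / q₂.toReal)))) *
          eLpNorm f q₁ volume) ∧
      (eLpNorm f q₁ volume ≠ ∞ →
        Continuous fun x => ∫ y, f y • gradient (heatKernel N t) (x - y)) := by
  set a := 1 / q₁.toReal with ha
  set b := 1 / q₂.toReal with hb
  have hq₁0 : q₁ ≠ 0 := (one_pos.trans_le hq₁).ne'
  have hb0 : 0 ≤ b := by positivity
  have ha1 : q₁ ≠ ∞ → 1 ≤ q₁.toReal := fun h => by
    have := ENNReal.toReal_mono h hq₁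
    simpa using this
  have hN1 : (1 : ℝ) ≤ N := by exact_mod_cast hN
  have hab1 : a - b < 1 := by
    by_contra! hcon
    nlinarith
  set p : ℝ := 1 / (1 - a + b) with hp
  have hp0 : 0 < p := by have : 0 < 1 - a + b := by linarith
                         positivity
  have hpi : 1 / p = 1 - a + b := by rw [hp, one_div_one_div]
  have hpab : 1 - 1 / p = a - b := by rw [hpi]; ring
  refine ⟨(4 * π) ^ (-(N : ℝ) / 2) * √2 * (8 * π / p) ^ ((N : ℝ) / 2 * (1 / p)), by positivity,
    fun t ht f => ?_⟩
  by_cases hf : AEStronglyMeasurable f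
  swap
  · have hz : ∀ x, ∫ y, f y • gradient (heatKernel N t) (x - y) = 0 := fun x =>
      integral_undef fun h => hf (aestronglyMeasurable_of_integrable_smul_gradient hN ht h)
    refine ⟨fun _ x => by simp [hz], fun h => ?_, fun _ => by simp only [hz]; exact continuous_const⟩
    have : 0 < q₂.toReal := ENNReal.toReal_pos (hq₁0.bot_lt.trans_le hq₁₂).ne' h
    have hb_pos : 0 < b := by rw [hb]; positivity
    simp [hz, this, ENNReal.zero_rpow_of_pos hb_pos]
  have hker := lintegral_heatMajorant_rpow (N := N) ht hp0
  rw [hpab] at hker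
  rw [← hker]
  have hGm : Measurable fun z => ENNReal.ofReal (heatMajorant N t z) :=
    (continuous_heatMajorant N t).measurable.ennreal_ofReal
  have hfe : AEMeasurable fun y => ‖f y‖ₑ := hf.enorm
  refine ⟨fun hq₂ x => ?_, fun hq₂ => ?_, fun hft => continuous_heatGradConv ht hq₁ ⟨hf, hft.lt_top⟩⟩
  · have hb' : b = 0 := by simp [hb, hq₂]
    refine (enorm_heatGradConv_le ht f x).trans ?_
    rcases eq_or_ne q₁ ∞ with hqt | hqt
    · have ha' : a = 0 := by simp [ha, hqt]
      have hp1 : p = 1 := by simp [hp, ha', hb']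
      subst hqt
      rw [hp1, one_div_one, ENNReal.rpow_one]
      simp_rw [ENNReal.rpow_one]
      calc _ ≤ ∫⁻ y, eLpNorm f ∞ volume * ENNReal.ofReal (heatMajorant N t (x - y)) := by
            refine lintegral_mono_ae ?_
            filter_upwards [enorm_ae_le_eLpNormEssSup f volume] with y hy
            rw [← eLpNorm_exponent_top] at hy
            gcongr
        _ = _ := by
            rw [lintegral_const_mul _ (show Measurable fun y =>
                ENNReal.ofReal (heatMajorant N t (x - y)) from hGm.comp (by fun_prop)),
              lintegral_sub_left_eq_self (fun y => ENNReal.ofReal (heatMajorant N t y)), mul_comm]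
    · have h := lintegral_mul_sub_le hfe hGm (ha1 hqt) le_rfl (by positivity) hp0
        (by rw [hpi, hb', ha]) x
      rw [ENNReal.rpow_zero, one_mul, sub_zero] at h
      rw [eLpNorm_eq_lintegral_rpow_enorm_toReal hq₁0 hqt, mul_comm, hpi, hb', add_zero]
      exact h
  · have hqt : q₁ ≠ ∞ := ne_top_of_le_ne_top hq₂ hq₁₂
    have hr : q₁.toReal ≤ q₂.toReal := ENNReal.toReal_mono hq₂ hq₁₂
    have h := lintegral_conv_rpow_le hfe hGm (ha1 hqt) hr hp0 hpi
    rw [eLpNorm_eq_lintegral_rpow_enorm_toReal hq₁0 hqt, mul_comm]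
    refine le_trans ?_ h
    gcongr with x
    exact enorm_heatGradConv_le ht f x

/-- A function with finite `p`-th power lower integral has a measurable minorant of the same `p`-th
power integral, and this minorant dominates all measurable minorants on measurable sets. -/
theorem exists_measurable_maximal_minorant {α : Type*} [MeasurableSpace α] {μ : Measure α}
    {φ : α → ℝ≥0∞} {p : ℝ} (hp : 0 < p) (hφ : ∫⁻ s, φ s ^ p ∂μ ≠ ∞) :
    ∃ m : α → ℝ≥0∞, Measurable m ∧ ∫⁻ s, m s ^ p ∂μ = ∫⁻ s, φ s ^ p ∂μ ∧
      (∀ᵐ s ∂μ, m s ≠ ∞) ∧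
      ∀ S, MeasurableSet S → ∀ h : α → ℝ≥0∞, AEMeasurable h (μ.restrict S) →
        h ≤ᵐ[μ.restrict S] φ → h ≤ᵐ[μ.restrict S] m := by
  obtain ⟨g, hgm, hgle, hgeq⟩ := exists_measurable_le_lintegral_eq μ fun s => φ s ^ p
  have hpow : ∀ s, (g s ^ (1 / p)) ^ p = g s := fun s => by
    rw [← ENNReal.rpow_mul, one_div_mul_cancel hp.ne', ENNReal.rpow_one]
  refine ⟨fun s => g s ^ (1 / p), hgm.pow_const _, by simp_rw [hpow, hgeq], ?_, ?_⟩
  · filter_upwards [ae_lt_top hgm (hgeq ▸ hφ)] with s hs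
    exact ENNReal.rpow_ne_top_of_nonneg (by positivity) hs.ne
  intro S hS h hh hhφ
  set G : α → ℝ≥0∞ := S.indicator fun s => hh.mk h s ^ p with hG
  have hGm : Measurable G := (hh.measurable_mk.pow_const _).indicator hS
  have hmk := (ae_restrict_iff' hS).1 hh.ae_eq_mk
  have hhφ' := (ae_restrict_iff' hS).1 hhφ
  have hle : ∫⁻ s, max (g s) (G s) ∂μ ≤ ∫⁻ s, g s ∂μ := by
    rw [← hgeq]
    refine lintegral_mono_ae ?_
    filter_upwards [hmk, hhφ'] with s h1 h2
    refine max_le (hgle s) ?_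
    by_cases hs : s ∈ S
    · rw [hG, Set.indicator_of_mem hs, ← h1 hs]
      gcongr
      exact h2 hs
    · simp [hG, hs]
  have hae := ae_eq_of_ae_le_of_lintegral_le (Filter.Eventually.of_forall fun s => le_max_left _ _)
    (hgeq ▸ hφ) (hgm.max hGm).aemeasurable hle
  refine (ae_restrict_iff' hS).2 ?_
  filter_upwards [hae, hmk] with s h1 h2 hs
  have h3 : G s ≤ g s := by rw [h1]; exact le_max_right _ _
  rw [hG, Set.indicator_of_mem hs, ← h2 hs] at h3
  rw [one_div, ENNReal.le_rpow_inv_iff hp]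
  exact h3

theorem eLpNorm_heatOpB_le {N : ℕ} {q₁ q₂ : ℝ≥0∞} (hq₂ : 1 ≤ q₂) {K β : ℝ} (hK : 0 < K)
    (H : ∀ t : ℝ, 0 < t → ∀ f : EuclideanSpace ℝ (Fin N) → ℝ,
      (q₂ = ∞ → ∀ x, ‖∫ y, f y • gradient (heatKernel N t) (x - y)‖ₑ ≤
        ENNReal.ofReal (K * t ^ (-β)) * eLpNorm f q₁ volume) ∧
      (q₂ ≠ ∞ → (∫⁻ x, ‖∫ y, f y • gradient (heatKernel N t) (x - y)‖ₑ ^ q₂.toReal) ^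
        (1 / q₂.toReal) ≤ ENNReal.ofReal (K * t ^ (-β)) * eLpNorm f q₁ volume) ∧
      (eLpNorm f q₁ volume ≠ ∞ →
        Continuous fun x => ∫ y, f y • gradient (heatKernel N t) (x - y)))
    {f : ℝ → EuclideanSpace ℝ (Fin N) → ℝ} {m : ℝ → ℝ≥0∞} {t : ℝ}
    (hmt : ∀ᵐ s ∂volume.restrict (Set.Ioo 0 t), m s ≠ ∞)
    (hm : ∀ h : ℝ → ℝ≥0∞, AEMeasurable h (volume.restrict (Set.Ioo 0 t)) →
      (h ≤ᵐ[volume.restrict (Set.Ioo 0 t)] fun s => eLpNorm (f s) q₁ volume) →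
      h ≤ᵐ[volume.restrict (Set.Ioo 0 t)] m) :
    eLpNorm (heatOpB f t) q₂ volume ≤
      ∫⁻ s in Set.Ioo 0 t, ENNReal.ofReal (K * (t - s) ^ (-β)) * m s := by
  set c : ℝ → ℝ≥0∞ := fun s => ENNReal.ofReal (K * (t - s) ^ (-β)) with hc
  have hcm : Measurable c := by fun_prop
  have hct : ∀ s, c s ≠ ∞ := fun s => ENNReal.ofReal_ne_top
  have hmem : ∀ᵐ s ∂volume.restrict (Set.Ioo 0 t), s ∈ Set.Ioo 0 t :=
    ae_restrict_mem measurableSet_Ioo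
  have hc0 : ∀ᵐ s ∂volume.restrict (Set.Ioo 0 t), c s ≠ 0 := by
    filter_upwards [hmem] with s hs
    have : 0 < t - s := sub_pos.2 hs.2
    exact (ENNReal.ofReal_pos.2 (by positivity)).ne'
  have hk : ∀ h : ℝ → ℝ≥0∞, AEMeasurable h (volume.restrict (Set.Ioo 0 t)) →
      (h ≤ᵐ[volume.restrict (Set.Ioo 0 t)] fun s => c s * eLpNorm (f s) q₁ volume) →
      h ≤ᵐ[volume.restrict (Set.Ioo 0 t)] fun s => c s * m s := by
    intro h hh hle
    have := hm (fun s => h s / c s) (hh.div hcm.aemeasurable) (by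
      filter_upwards [hle] with s hs
      exact ENNReal.div_le_of_le_mul' hs)
    filter_upwards [this, hc0] with s h1 h2
    rw [mul_comm]
    exact (ENNReal.div_le_iff h2 (hct s)).1 h1
  rcases eq_or_ne q₂ ∞ with hqt | hqt
  · rw [hqt, eLpNorm_exponent_top]
    refine essSup_le_of_ae_le _ (Filter.Eventually.of_forall fun x => ?_)
    refine enorm_integral_le_of_minorant hk ?_
    filter_upwards [hmem] with s hs
    exact (H (t - s) (sub_pos.2 hs.2) (f s)).1 hqt x
  · have hq1 : 1 ≤ q₂.toReal := by simpa using ENNReal.toReal_mono hqt hq₂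
    rw [eLpNorm_eq_lintegral_rpow_enorm_toReal (one_pos.trans_le hq₂).ne' hqt]
    refine eLpNorm_integral_le_of_minorant (φ := fun s => c s * eLpNorm (f s) q₁ volume)
      hq1 hk ?_ ?_
    · filter_upwards [hmt] with s hs
      exact ENNReal.mul_ne_top (hct s) hs
    · filter_upwards [hmem, hc0] with s hs hcs hφ
      obtain ⟨-, h2, h3⟩ := H (t - s) (sub_pos.2 hs.2) (f s)
      refine ⟨h3 fun h => hφ ?_, h2 hqt⟩
      rw [h, ENNReal.mul_top hcs]

/-- Lemma 2: if `(N/2)(1/q₁ - 1/q₂) + 1/2 < 1` and `1/r₁ + (N/2)(1/q₁ - 1/q₂) = 1/2 + 1/r₂`,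
then `B` is bounded from `L^{r₁}(0,T;L^{q₁})` to `L^{r₂}(0,T;L^{q₂})`. -/
theorem heatOpB_bounded (N : ℕ) (hN : 0 < N) (T : ℝ≥0∞) (hT : 0 < T)
    (r₁ r₂ : ℝ) (q₁ q₂ : ℝ≥0∞)
    (hr₁ : 1 < r₁) (hr₂ : 1 < r₂) (hq₁ : 1 ≤ q₁) (hq₁₂ : q₁ ≤ q₂)
    (hcond : (N : ℝ) / 2 * (1 / q₁.toReal - 1 / q₂.toReal) + 1 / 2 < 1)
    (hscal : 1 / r₁ + (N : ℝ) / 2 * (1 / q₁.toReal - 1 / q₂.toReal) = 1 / 2 + 1 / r₂) :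
    ∃ C > 0, ∀ f : ℝ → EuclideanSpace ℝ (Fin N) → ℝ,
      mixedNorm r₂ q₂ T (heatOpB f) ≤ ENNReal.ofReal C * mixedNorm r₁ q₁ T f := by
  obtain ⟨K, hK, H⟩ := heatGradConv_bounded hN hq₁ hq₁₂ hcond
  set β : ℝ := 1 / 2 + (N : ℝ) / 2 * (1 / q₁.toReal - 1 / q₂.toReal) with hβ
  have hr₂0 : 0 < r₂ := by linarith
  have hr₁0 : 0 < r₁ := by linarith
  obtain ⟨C, hC, hfrac⟩ := fractionalIntegral_bounded (β := β) (p := r₁) (r := r₂)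
    (by linarith) hr₁ hr₂0 (by rw [hβ]; linarith)
  have hKC : ENNReal.ofReal K * C ≠ ∞ := ENNReal.mul_ne_top ENNReal.ofReal_ne_top hC
  refine ⟨(ENNReal.ofReal K * C).toReal + 1, by positivity, fun f => ?_⟩
  have hKC_le : ENNReal.ofReal K * C ≤ ENNReal.ofReal ((ENNReal.ofReal K * C).toReal + 1) := by
    rw [ENNReal.le_ofReal_iff_toReal_le hKC (by positivity)]
    linarith
  set Ω : Set ℝ := {t : ℝ | 0 < t ∧ ENNReal.ofReal t < T} with hΩ
  have hΩm : MeasurableSet Ω := (measurableSet_lt measurable_const measurable_id).inter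
    (measurableSet_lt ENNReal.measurable_ofReal measurable_const)
  have hsub : ∀ t ∈ Ω, Set.Ioo 0 t ⊆ Ω := fun t ht s hs =>
    ⟨hs.1, (ENNReal.ofReal_le_ofReal hs.2.le).trans_lt ht.2⟩
  rw [mixedNorm, mixedNorm, ← hΩ]
  by_cases hfin : ∫⁻ t in Ω, eLpNorm (f t) q₁ volume ^ r₁ = ∞
  · rw [hfin, ENNReal.top_rpow_of_pos (by positivity), ENNReal.mul_top]
    · exact le_top
    · exact (ENNReal.ofReal_pos.2 (by positivity)).ne'
  obtain ⟨m, hmm, hmeq, hmt, hmax⟩ := exists_measurable_maximal_minorant hr₁0 hfin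
  have hpt : ∀ t ∈ Ω, eLpNorm (heatOpB f t) q₂ volume ≤ ENNReal.ofReal K * ∫⁻ s,
      (Set.Ioi 0).indicator (fun u => ENNReal.ofReal (u ^ (-β))) (t - s) * Ω.indicator m s := by
    intro t ht
    have hres : (volume.restrict Ω).restrict (Set.Ioo 0 t) = volume.restrict (Set.Ioo 0 t) := by
      rw [Measure.restrict_restrict measurableSet_Ioo, Set.inter_eq_left.2 (hsub t ht)]
    have hm' := hmax (Set.Ioo 0 t) measurableSet_Ioo
    have hmt' := ae_restrict_of_ae (s := Set.Ioo 0 t) hmt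
    rw [hres] at hm' hmt'
    refine (eLpNorm_heatOpB_le (hq₁.trans hq₁₂) hK H hmt' hm').trans ?_
    rw [← lintegral_const_mul' _ _ ENNReal.ofReal_ne_top, ← lintegral_indicator measurableSet_Ioo]
    refine lintegral_mono fun s => ?_
    by_cases hs : s ∈ Set.Ioo 0 t
    · rw [Set.indicator_of_mem hs, Set.indicator_of_mem (hsub t ht hs),
        Set.indicator_of_mem (show t - s ∈ Set.Ioi 0 from sub_pos.2 hs.2),
        ENNReal.ofReal_mul hK.le, mul_assoc]
    · rw [Set.indicator_of_notMem hs]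
      exact zero_le
  calc (∫⁻ t in Ω, eLpNorm (heatOpB f t) q₂ volume ^ r₂) ^ (1 / r₂)
      ≤ (∫⁻ t, (ENNReal.ofReal K * ∫⁻ s, (Set.Ioi 0).indicator
          (fun u => ENNReal.ofReal (u ^ (-β))) (t - s) * Ω.indicator m s) ^ r₂) ^ (1 / r₂) := by
        refine ENNReal.rpow_le_rpow ?_ (by positivity)
        refine (setLIntegral_mono' hΩm fun t ht => ?_).trans (setLIntegral_le_lintegral Ω _)
        gcongr
        exact hpt t ht
    _ = ENNReal.ofReal K * (∫⁻ t, (∫⁻ s, (Set.Ioi 0).indicator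
          (fun u => ENNReal.ofReal (u ^ (-β))) (t - s) * Ω.indicator m s) ^ r₂) ^ (1 / r₂) := by
        simp_rw [ENNReal.mul_rpow_of_nonneg _ _ hr₂0.le]
        rw [lintegral_const_mul' _ _ (ENNReal.rpow_ne_top_of_nonneg hr₂0.le ENNReal.ofReal_ne_top),
          ENNReal.mul_rpow_of_nonneg _ _ (by positivity), ← ENNReal.rpow_mul,
          mul_one_div_cancel hr₂0.ne', ENNReal.rpow_one]
    _ ≤ ENNReal.ofReal K * (C * (∫⁻ s, Ω.indicator m s ^ r₁) ^ (1 / r₁)) := by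
        gcongr
        exact hfrac _ (hmm.indicator hΩm)
    _ = ENNReal.ofReal K * C * (∫⁻ t in Ω, eLpNorm (f t) q₁ volume ^ r₁) ^ (1 / r₁) := by
        have hind : ∀ s, Ω.indicator m s ^ r₁ = Ω.indicator (fun s => m s ^ r₁) s := fun s => by
          by_cases hs : s ∈ Ω <;> simp [hs, hr₁0]
        simp_rw [← hmeq, hind, lintegral_indicator hΩm, mul_assoc]
    _ ≤ _ := by gcongr
end
end

section
/- Let 2 < r̄ < ∞, q > N r̄/(r̄ - 2), T ∈ (0,∞], and set σ = (1/2)(1 - N/q) - 1/r̄. Suppose t^σ f(t) ∈ L^{r̄}(0,T; L^q(ℝ^N)). Then the function (Bf)(t) = ∫₀ᵗ ∇e^{(t-s)Δ} f(s) ds belongs to L^∞(0,T; L^∞(ℝ^N)) and for every t ∈ (0,T), ‖Bf(t)‖_{L^∞} ≤ C ‖s^σ f(s)‖_{L^{r̄}(0,t; L^q)}, with C depending only on N, q, r̄. -/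
open MeasureTheory Real
open scoped ENNReal

noncomputable section

/-- Hölder's inequality for a dominated function, with no measurability assumption on the
second factor `φ`. -/
theorem lintegral_le_Lp_mul_Lq_of_le_mul {α : Type*} [MeasurableSpace α] (μ : Measure α)
    {p p' : ℝ} (hp : p.HolderConjugate p') {F k φ : α → ℝ≥0∞} (hF : AEMeasurable F μ)
    (hk : AEMeasurable k μ) (hk0 : ∀ᵐ x ∂μ, k x ≠ 0) (hkt : ∀ᵐ x ∂μ, k x ≠ ∞)
    (h : ∀ᵐ x ∂μ, F x ≤ k x * φ x) :
    ∫⁻ x, F x ∂μ ≤ (∫⁻ x, k x ^ p ∂μ) ^ (1 / p) * (∫⁻ x, φ x ^ p' ∂μ) ^ (1 / p') := by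
  calc ∫⁻ x, F x ∂μ = ∫⁻ x, (k * fun x => F x / k x) x ∂μ := by
        refine lintegral_congr_ae ?_
        filter_upwards [hk0, hkt] with x h0 ht
        exact (ENNReal.mul_div_cancel h0 ht).symm
    _ ≤ (∫⁻ x, k x ^ p ∂μ) ^ (1 / p) * (∫⁻ x, (F x / k x) ^ p' ∂μ) ^ (1 / p') :=
        ENNReal.lintegral_mul_le_Lp_mul_Lq μ hp hk (hF.div hk)
    _ ≤ _ := by
        have hp' := hp.symm.pos
        have := hp.symm.one_div_nonneg
        refine mul_le_mul_right (ENNReal.rpow_le_rpow ?_ this) _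
        refine lintegral_mono_ae ?_
        filter_upwards [h] with x hx
        have : F x / k x ≤ φ x := ENNReal.div_le_of_le_mul' hx
        gcongr

theorem hasFDerivAt_heatKernel (N : ℕ) (t : ℝ) (x : EuclideanSpace ℝ (Fin N)) :
    HasFDerivAt (heatKernel N t) ((4 * π * t) ^ (-(N : ℝ) / 2) •
      Real.exp (-‖x‖ ^ 2 / (4 * t)) • (-1 / (4 * t)) • (2 : ℝ) • innerSL ℝ x) x := by
  have h := ((hasStrictFDerivAt_norm_sq x).hasFDerivAt.const_mul (-1 / (4 * t))).exp.const_mul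
    ((4 * π * t) ^ (-(N : ℝ) / 2))
  have e : -1 / (4 * t) * ‖x‖ ^ 2 = -‖x‖ ^ 2 / (4 * t) := by ring
  rw [e] at h
  convert! h using 1
  · ext y
    simp only [heatKernel]
    congr 2
    ring
  · simp [ofNat_smul_eq_nsmul]

theorem norm_gradient_heatKernel_le_s7 (N : ℕ) {t : ℝ} (ht : 0 < t)
    (x : EuclideanSpace ℝ (Fin N)) :
    ‖gradient (heatKernel N t) x‖ ≤
      (4 * π) ^ (-(N : ℝ) / 2) * t ^ (-(N : ℝ) / 2 - 1 / 2) *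
        Real.exp (-(1 / (8 * t)) * ‖x‖ ^ 2) := by
  have hs : 0 < √t := Real.sqrt_pos.2 ht
  have hss : √t * √t = t := Real.mul_self_sqrt ht.le
  have hlin : ‖x‖ / (2 * t) ≤ t ^ (-(1 / 2) : ℝ) * Real.exp (1 / (8 * t) * ‖x‖ ^ 2) := by
    rw [Real.rpow_neg ht.le, ← Real.sqrt_eq_rpow]
    have h1 : 1 / (8 * t) * ‖x‖ ^ 2 + 1 ≤ Real.exp (1 / (8 * t) * ‖x‖ ^ 2) :=
      Real.add_one_le_exp _
    have h2 : ‖x‖ / (2 * t) ≤ (√t)⁻¹ * (1 / (8 * t) * ‖x‖ ^ 2 + 1) := by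
      have e : 1 / (8 * t) * ‖x‖ ^ 2 = (‖x‖ / √t) ^ 2 / 8 := by
        rw [div_pow, Real.sq_sqrt ht.le]; field_simp
      have e' : ‖x‖ / (2 * t) = (√t)⁻¹ * ((‖x‖ / √t) / 2) := by
        rw [← hss]; field_simp; rw [Real.sqrt_sq hs.le]
      rw [e, e']
      gcongr
      nlinarith [sq_nonneg (‖x‖ / √t - 2)]
    exact h2.trans (by gcongr)
  have hn : ‖gradient (heatKernel N t) x‖ =
      (4 * π * t) ^ (-(N : ℝ) / 2) * (Real.exp (-‖x‖ ^ 2 / (4 * t)) * (‖x‖ / (2 * t))) := by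
    rw [gradient, LinearIsometryEquiv.norm_map, (hasFDerivAt_heatKernel N t x).fderiv,
      norm_smul, norm_smul, norm_smul, norm_smul, innerSL_apply_norm,
      Real.norm_of_nonneg (by positivity), Real.norm_of_nonneg (Real.exp_pos _).le,
      norm_div, Real.norm_of_nonneg (by positivity : 0 ≤ 4 * t)]
    norm_num
    left
    field_simp
    norm_num
  rw [hn, Real.mul_rpow (by positivity) ht.le, sub_eq_add_neg, Real.rpow_add ht]
  calc _ ≤ (4 * π) ^ (-(N : ℝ) / 2) * t ^ (-(N : ℝ) / 2) * (Real.exp (-‖x‖ ^ 2 / (4 * t)) *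
        (t ^ (-(1 / 2) : ℝ) * Real.exp (1 / (8 * t) * ‖x‖ ^ 2))) := by gcongr
    _ = (4 * π) ^ (-(N : ℝ) / 2) * (t ^ (-(N : ℝ) / 2) * t ^ (-(1 / 2) : ℝ)) *
        (Real.exp (-‖x‖ ^ 2 / (4 * t)) * Real.exp (1 / (8 * t) * ‖x‖ ^ 2)) := by ring
    _ = _ := by
      rw [← Real.exp_add]
      congr 2
      field_simp
      ring

theorem lintegral_exp_neg_mul_sq_norm_sub_rpow {N : ℕ} {b p : ℝ} (hb : 0 < b) (hp : 0 < p)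
    (x : EuclideanSpace ℝ (Fin N)) :
    ∫⁻ y, ENNReal.ofReal (Real.exp (-b * ‖x - y‖ ^ 2)) ^ p =
      ENNReal.ofReal ((π / (p * b)) ^ ((N : ℝ) / 2)) := by
  have hpb : 0 < p * b := by positivity
  rw [lintegral_sub_left_eq_self
    (fun y : EuclideanSpace ℝ (Fin N) => ENNReal.ofReal (Real.exp (-b * ‖y‖ ^ 2)) ^ p) x]
  have h := GaussianFourier.integral_rexp_neg_mul_sq_norm (V := EuclideanSpace ℝ (Fin N)) hpb
  rw [finrank_euclideanSpace, Fintype.card_fin] at h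
  have hi : Integrable (fun v : EuclideanSpace ℝ (Fin N) => Real.exp (-(p * b) * ‖v‖ ^ 2)) :=
    .of_integral_ne_zero (by rw [h]; positivity)
  rw [← h, ofReal_integral_eq_lintegral_ofReal hi (.of_forall fun _ => (Real.exp_pos _).le)]
  refine lintegral_congr fun y => ?_
  rw [ENNReal.ofReal_rpow_of_pos (Real.exp_pos _), ← Real.exp_mul]
  congr 2
  ring

/-- The constant in the `L^q`-`L^∞` smoothing estimate for `∇e^{tΔ}`, where `p` is the conjugate
exponent of `q`. -/
def heatGradConst (N : ℕ) (p : ℝ) : ℝ :=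
  (4 * π) ^ (-(N : ℝ) / 2) * ((8 * π / p) ^ ((N : ℝ) / 2)) ^ (1 / p)

theorem enorm_integral_smul_gradient_heatKernel_le {N : ℕ} {p q t : ℝ}
    (hpq : p.HolderConjugate q) (ht : 0 < t) (f : EuclideanSpace ℝ (Fin N) → ℝ)
    (x : EuclideanSpace ℝ (Fin N)) :
    ‖∫ y, f y • gradient (heatKernel N t) (x - y)‖ₑ ≤
      ENNReal.ofReal (heatGradConst N p * t ^ (-(1 / 2 + (N : ℝ) / (2 * q)))) *
        eLpNorm f (ENNReal.ofReal q) volume := by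
  have hp := hpq.pos
  have hq := hpq.symm.pos
  by_cases hm : AEStronglyMeasurable (fun y => f y • gradient (heatKernel N t) (x - y)) volume
  swap
  · rw [integral_non_aestronglyMeasurable hm]; simp
  refine (enorm_integral_le_lintegral_enorm _).trans ?_
  set A : ℝ := (4 * π) ^ (-(N : ℝ) / 2) * t ^ (-(N : ℝ) / 2 - 1 / 2) with hA
  have hA0 : 0 < A := by positivity
  have hb : 0 < 1 / (8 * t) := by positivity
  refine (lintegral_le_Lp_mul_Lq_of_le_mul volume hpq (F := fun y => _)
    (k := fun y => ENNReal.ofReal A * ENNReal.ofReal (Real.exp (-(1 / (8 * t)) * ‖x - y‖ ^ 2)))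
    (φ := fun y => ‖f y‖ₑ) hm.enorm (by fun_prop) ?_ ?_ ?_).trans_eq ?_
  · refine .of_forall fun y => mul_ne_zero ?_ ?_ <;>
      simp only [ne_eq, ENNReal.ofReal_eq_zero, not_le] <;> positivity
  · exact .of_forall fun y => by finiteness
  · refine .of_forall fun y => ?_
    rw [enorm_smul, mul_comm, ← ENNReal.ofReal_mul hA0.le]
    gcongr
    rw [← ofReal_norm]
    exact ENNReal.ofReal_le_ofReal (norm_gradient_heatKernel_le_s7 N ht _)
  · rw [eLpNorm_eq_lintegral_rpow_enorm_toReal (by simpa using hq) (by simp),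
      ENNReal.toReal_ofReal hq.le]
    congr 1
    simp_rw [ENNReal.mul_rpow_of_nonneg _ _ hp.le]
    rw [lintegral_const_mul' _ _ (by finiteness),
      lintegral_exp_neg_mul_sq_norm_sub_rpow hb hp,
      ENNReal.ofReal_rpow_of_pos hA0, ← ENNReal.ofReal_mul (by positivity),
      ENNReal.ofReal_rpow_of_pos (by positivity), Real.mul_rpow (by positivity) (by positivity),
      ← Real.rpow_mul hA0.le, mul_one_div_cancel hp.ne', Real.rpow_one, hA, heatGradConst]
    have e : π / (p * (1 / (8 * t))) = 8 * π / p * t := by field_simp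
    rw [e, Real.mul_rpow (by positivity) ht.le,
      Real.mul_rpow (x := _ ^ _) (by positivity) (by positivity), ← Real.rpow_mul ht.le]
    have hqp : 1 / q = 1 - 1 / p := by
      have := hpq.inv_add_inv_eq_one
      simp only [one_div]; linarith
    have ee : -(1 / 2 + (N : ℝ) / (2 * q)) = (-(N : ℝ) / 2 - 1 / 2) + (N : ℝ) / 2 * (1 / p) := by
      have : (N : ℝ) / (2 * q) = N / 2 * (1 / q) := by field_simp
      rw [this, hqp]; ring
    rw [ee, Real.rpow_add ht]
    congr 1
    ring

theorem lintegral_rpow_mul_sub_rpow_le {a b t : ℝ} (ha1 : a < 1) (hb1 : b < 1)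
    (hab : a + b = 1) (ht : 0 < t) :
    ∫⁻ s in Set.Ioo 0 t, ENNReal.ofReal (s ^ (-a) * (t - s) ^ (-b)) ≤
      ENNReal.ofReal (2 ^ b / (1 - a) + 2 ^ a / (1 - b)) := by
  have i1 : IntervalIntegrable (fun s : ℝ => (t / 2) ^ (-b) * s ^ (-a)) volume 0 t :=
    (intervalIntegral.intervalIntegrable_rpow' (by linarith)).const_mul _
  have i2 : IntervalIntegrable (fun s : ℝ => (t / 2) ^ (-a) * (t - s) ^ (-b)) volume 0 t := by
    have := ((intervalIntegral.intervalIntegrable_rpow' (a := t) (b := 0)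
      (by linarith : -1 < -b)).comp_sub_left t).const_mul ((t / 2) ^ (-a))
    simpa using this
  have hI : ∫ s in (0 : ℝ)..t, ((t / 2) ^ (-b) * s ^ (-a) + (t / 2) ^ (-a) * (t - s) ^ (-b)) =
      2 ^ b / (1 - a) + 2 ^ a / (1 - b) := by
    rw [intervalIntegral.integral_add i1 i2, intervalIntegral.integral_const_mul,
      intervalIntegral.integral_const_mul,
      intervalIntegral.integral_comp_sub_left (fun s : ℝ => s ^ (-b)) t, sub_self, sub_zero,
      integral_rpow (.inl (by linarith)), integral_rpow (.inl (by linarith)),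
      Real.zero_rpow (by linarith), Real.zero_rpow (by linarith), sub_zero, sub_zero]
    have hb' : -a + 1 = b := by linarith
    have ha' : -b + 1 = a := by linarith
    have e1 : 1 - a = b := by linarith
    have e2 : 1 - b = a := by linarith
    rw [hb', ha', e1, e2, Real.div_rpow ht.le two_pos.le, Real.div_rpow ht.le two_pos.le,
      Real.rpow_neg ht.le, Real.rpow_neg ht.le, Real.rpow_neg two_pos.le,
      Real.rpow_neg two_pos.le]
    have := Real.rpow_pos_of_pos ht a
    have := Real.rpow_pos_of_pos ht b
    field_simp
  rw [← hI, intervalIntegral.integral_of_le ht.le, integral_Ioc_eq_integral_Ioo,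
    ofReal_integral_eq_lintegral_ofReal]
  · refine setLIntegral_mono' measurableSet_Ioo fun s hs => ENNReal.ofReal_le_ofReal ?_
    have h1 : 0 < s := hs.1
    have h2 : 0 < t - s := sub_pos.2 hs.2
    rcases le_total s (t / 2) with h | h
    · have : (t - s) ^ (-b) ≤ (t / 2) ^ (-b) :=
        Real.rpow_le_rpow_of_nonpos (by positivity) (by linarith) (by linarith)
      have h3 : 0 ≤ (t / 2) ^ (-a) * (t - s) ^ (-b) := by positivity
      have h4 : 0 ≤ s ^ (-a) := by positivity
      nlinarith
    · have : s ^ (-a) ≤ (t / 2) ^ (-a) :=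
        Real.rpow_le_rpow_of_nonpos (by positivity) (by linarith) (by linarith)
      have h3 : 0 ≤ (t / 2) ^ (-b) * s ^ (-a) := by positivity
      have h4 : 0 ≤ (t - s) ^ (-b) := by positivity
      nlinarith
  · exact ((intervalIntegrable_iff_integrableOn_Ioo_of_le ht.le).1 (i1.add i2))
  · refine ae_restrict_of_forall_mem measurableSet_Ioo fun s hs => ?_
    have h1 : 0 < s := hs.1
    have h2 : 0 < t - s := sub_pos.2 hs.2
    simp only [Pi.zero_apply]
    positivity

/-- Lemma 7: for `2 < r̄ < ∞`, `q > Nr̄/(r̄-2)` and `σ = (1/2)(1 - N/q) - 1/r̄`, if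
`t^σ f ∈ L^{r̄}(0,T;L^q)` then `Bf ∈ L^∞(0,T;L^∞)` with
`‖Bf(t)‖_{L^∞} ≤ C ‖s^σ f‖_{L^{r̄}(0,t;L^q)}` for every `t ∈ (0,T)`. -/
theorem heatOpB_Linfty_bound (N : ℕ) (hN : 0 < N) (r q : ℝ)
    (hr : 2 < r) (hq : (N : ℝ) * r / (r - 2) < q) :
    ∃ C > 0, ∀ (T : ℝ≥0∞), 0 < T → ∀ f : ℝ → EuclideanSpace ℝ (Fin N) → ℝ,
      mixedNorm r (ENNReal.ofReal q) T
          (fun s x => s ^ ((1 - (N : ℝ) / q) / 2 - 1 / r) * f s x) < ∞ →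
      ∀ t : ℝ, 0 < t → ENNReal.ofReal t < T →
        eLpNorm (heatOpB f t) ∞ volume ≤
          ENNReal.ofReal C * mixedNorm r (ENNReal.ofReal q) (ENNReal.ofReal t)
            (fun s x => s ^ ((1 - (N : ℝ) / q) / 2 - 1 / r) * f s x) := by
  have hN' : (1 : ℝ) ≤ N := by exact_mod_cast hN
  have hr2 : 0 < r - 2 := by linarith
  have hr0 : 0 < r := by linarith
  have hNq : (N : ℝ) < q * ((r - 2) / r) := by
    rw [div_lt_iff₀ hr2] at hq
    rw [mul_div_assoc', lt_div_iff₀ hr0]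
    exact hq
  have hrr : (r - 2) / r = 1 - 2 * (1 / r) := by field_simp
  have hr1 : 0 < 1 / r := by positivity
  have hr1' : 1 / r < 1 / 2 := one_div_lt_one_div_of_lt two_pos hr
  have hq0 : 0 < q := by
    by_contra! h
    have : 0 < (r - 2) / r := by positivity
    nlinarith
  have hNq' : (N : ℝ) / q < 1 - 2 * (1 / r) := by
    rw [div_lt_iff₀ hq0, ← hrr, mul_comm]
    exact hNq
  have hNq0 : 0 < (N : ℝ) / q := by positivity
  have hq1 : 1 < q := by
    rw [hrr] at hNq
    nlinarith
  set p := q.conjExponent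
  have hpq : p.HolderConjugate q := (Real.HolderConjugate.conjExponent hq1).symm
  set r' := r.conjExponent
  have hrr' : r'.HolderConjugate r := (Real.HolderConjugate.conjExponent (by linarith)).symm
  have hr'0 := hrr'.pos
  set σ := (1 - (N : ℝ) / q) / 2 - 1 / r with hσ
  set β := 1 / 2 + (N : ℝ) / (2 * q) with hβ
  have hβ' : β = 1 / 2 + (N : ℝ) / q / 2 := by rw [hβ]; field_simp
  have hir' : 1 / r' = 1 - 1 / r := by
    have := hrr'.inv_add_inv_eq_one
    simp only [one_div]; linarith
  have hr'e : r' * (1 - 1 / r) = 1 := by rw [← hir']; field_simp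
  have ha1 : σ * r' < 1 := by
    rw [← hr'e, mul_comm]
    gcongr
    rw [hσ]; linarith
  have hb1 : β * r' < 1 := by
    rw [← hr'e, mul_comm]
    gcongr
    rw [hβ']; linarith
  have hab : σ * r' + β * r' = 1 := by
    rw [← hr'e, hσ, hβ']; ring
  have h1a : 0 < 1 - σ * r' := by linarith
  have h1b : 0 < 1 - β * r' := by linarith
  set c := heatGradConst N p with hc
  have hc0 : 0 < c := by
    have := hpq.pos
    rw [hc, heatGradConst]; positivity
  set D := 2 ^ (β * r') / (1 - σ * r') + 2 ^ (σ * r') / (1 - β * r') with hD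
  have hD0 : 0 < D := by positivity
  refine ⟨c * D ^ (1 / r'), by positivity, fun T _ f _ t ht _ => ?_⟩
  rw [eLpNorm_exponent_top]
  refine essSup_le_of_ae_le _ (.of_forall fun x => ?_)
  simp only [heatOpB]
  by_cases hm : AEStronglyMeasurable
      (fun s => ∫ y, f s y • gradient (heatKernel N (t - s)) (x - y))
      (volume.restrict (Set.Ioo 0 t))
  swap
  · rw [integral_non_aestronglyMeasurable hm]; simp
  refine (enorm_integral_le_lintegral_enorm _).trans ?_
  have hset : {s : ℝ | 0 < s ∧ ENNReal.ofReal s < ENNReal.ofReal t} = Set.Ioo 0 t := by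
    ext s
    simp [ENNReal.ofReal_lt_ofReal_iff ht]
  rw [mixedNorm, hset]
  refine (lintegral_le_Lp_mul_Lq_of_le_mul (volume.restrict (Set.Ioo 0 t)) hrr' (F := fun s => _)
    (k := fun s => ENNReal.ofReal c * ENNReal.ofReal (s ^ (-σ) * (t - s) ^ (-β)))
    (φ := fun s => eLpNorm (fun x => s ^ σ * f s x) (ENNReal.ofReal q) volume)
    hm.enorm (by fun_prop) ?_ ?_ ?_).trans ?_
  · refine ae_restrict_of_forall_mem measurableSet_Ioo fun s hs => ?_
    have h1 : 0 < s := hs.1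
    have h2 : 0 < t - s := sub_pos.2 hs.2
    refine mul_ne_zero ?_ ?_ <;>
      simp only [ne_eq, ENNReal.ofReal_eq_zero, not_le] <;> positivity
  · exact .of_forall fun s => by finiteness
  · refine ae_restrict_of_forall_mem measurableSet_Ioo fun s hs => ?_
    have h1 : 0 < s := hs.1
    have h2 : 0 < t - s := sub_pos.2 hs.2
    refine (enorm_integral_smul_gradient_heatKernel_le hpq h2 (f s) x).trans_eq ?_
    have hsm : (fun x => s ^ σ * f s x) = s ^ σ • f s := rfl
    rw [hsm, eLpNorm_const_smul, Real.enorm_of_nonneg (by positivity), ← mul_assoc,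
      ← ENNReal.ofReal_mul hc0.le, ← ENNReal.ofReal_mul (by positivity)]
    congr 2
    have hσs : s ^ (-σ) * s ^ σ = 1 := by
      rw [← Real.rpow_add h1, neg_add_cancel, Real.rpow_zero]
    calc c * (t - s) ^ (-β) = c * (t - s) ^ (-β) * (s ^ (-σ) * s ^ σ) := by rw [hσs, mul_one]
      _ = _ := by ring
  · gcongr
    calc _ = (ENNReal.ofReal c ^ r' * ∫⁻ s in Set.Ioo 0 t,
          ENNReal.ofReal (s ^ (-(σ * r')) * (t - s) ^ (-(β * r')))) ^ (1 / r') := by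
          rw [← lintegral_const_mul' _ _ (by finiteness)]
          congr 1
          refine setLIntegral_congr_fun measurableSet_Ioo fun s hs => ?_
          have h1 : 0 < s := hs.1
          have h2 : 0 < t - s := sub_pos.2 hs.2
          rw [ENNReal.mul_rpow_of_nonneg _ _ hr'0.le,
            ENNReal.ofReal_rpow_of_pos (x := _ * _) (by positivity),
            Real.mul_rpow (by positivity) (by positivity), ← Real.rpow_mul h1.le,
            ← Real.rpow_mul h2.le, neg_mul, neg_mul]
      _ ≤ (ENNReal.ofReal c ^ r' * ENNReal.ofReal D) ^ (1 / r') := by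
          gcongr
          exact lintegral_rpow_mul_sub_rpow_le ha1 hb1 hab ht
      _ = _ := by
          rw [ENNReal.mul_rpow_of_nonneg _ _ (by positivity), ← ENNReal.rpow_mul,
            mul_one_div_cancel hr'0.ne', ENNReal.rpow_one, ENNReal.ofReal_rpow_of_pos hD0,
            ← ENNReal.ofReal_mul hc0.le]
end
end
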